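/- arXiv:1703.00766 — 2 statements merged into one kernel-verified Lean document; each statement's English description precedes it below -/
import Mathlib

section
/- Let R be a Noetherian ring, 𝔞 an ideal, S a Serre subcategory of the category of R-modules, s ≥ 0, and M an R-module such that Ext^{s+1}_R(R/𝔞, M) ∈ S. If Ext^j_R(R/𝔞, H^i_𝔞(M)) ∈ S for all i < s and all j ≥ 0, then Ext^1_R(R/𝔞, H^s_𝔞(M)) ∈ S. -/
open CategoryTheory

universe u

variable (R : Type u) [CommRing R]

/-- The `i`-th Ext module `Ext^i_R(N, M)` of `R`-modules. -/
noncomputable def extModule (i : ℕ) (N M : ModuleCat.{u} R) : ModuleCat.{u} R :=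
  ((Ext R (ModuleCat.{u} R) i).obj (Opposite.op N)).obj M

/-- A module is weakly Laskerian if every quotient has finitely many associated primes. -/
def IsWeaklyLaskerian (M : Type u) [AddCommGroup M] [Module R M] : Prop :=
  ∀ N : Submodule R M, (associatedPrimes R (M ⧸ N)).Finite

/-- `M` is `𝔞`-cofinite: `Supp M ⊆ V(𝔞)` and all `Ext^i_R(R/𝔞, M)` are finitely generated. -/
def IsCofinite (𝔞 : Ideal R) (M : ModuleCat.{u} R) : Prop :=
  Module.support R M ⊆ PrimeSpectrum.zeroLocus (𝔞 : Set R) ∧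
    ∀ i : ℕ, Module.Finite R (extModule R i (ModuleCat.of R (R ⧸ 𝔞)) M)

/-- `M` is `𝔞`-weakly cofinite: `Supp M ⊆ V(𝔞)` and all `Ext^i_R(R/𝔞, M)` are weakly
Laskerian. -/
def IsWeaklyCofinite (𝔞 : Ideal R) (M : ModuleCat.{u} R) : Prop :=
  Module.support R M ⊆ PrimeSpectrum.zeroLocus (𝔞 : Set R) ∧
    ∀ i : ℕ, IsWeaklyLaskerian R (extModule R i (ModuleCat.of R (R ⧸ 𝔞)) M)

/-- The Krull dimension of the support of a module. -/
noncomputable def suppDim (M : Type u) [AddCommGroup M] [Module R M] : WithBot ℕ∞ :=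
  Order.krullDim (Module.support R M)

/-- The cohomological dimension `cd(𝔞, M) = sup {i | H^i_𝔞(M) ≠ 0}`, as an element of `ℕ∞`. -/
noncomputable def cohomologicalDim (𝔞 : Ideal R) (M : ModuleCat.{u} R) : ℕ∞ :=
  ⨆ i ∈ {i : ℕ | Nontrivial ((localCohomology 𝔞 i).obj M)}, (i : ℕ∞)

/-- `p` is an attached prime of `M`: `p` is prime and is the annihilator of a quotient
of `M`. -/
def IsAttachedPrime (M : Type u) [AddCommGroup M] [Module R M] (p : Ideal R) : Prop :=
  p.IsPrime ∧ ∃ N : Submodule R M, p = Module.annihilator R (M ⧸ N)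

/-- A Serre subcategory of the category of `R`-modules: a class of modules closed under
submodules (subobjects), quotients, and extensions. -/
structure SerreClass where
  P : ModuleCat.{u} R → Prop
  mem_of_mono : ∀ {X Y : ModuleCat.{u} R} (f : X ⟶ Y), Mono f → P Y → P X
  mem_of_epi : ∀ {X Y : ModuleCat.{u} R} (f : X ⟶ Y), Epi f → P X → P Y
  mem_of_extension : ∀ (S : CategoryTheory.ShortComplex (ModuleCat.{u} R)),
    S.ShortExact → P S.X₁ → P S.X₃ → P S.X₂

/-
Let `C₀ = M, C₁, C₂, …` be the cosyzygies of `M`, with `0 ⟶ Cₖ ⟶ Iₖ ⟶ Cₖ₊₁ ⟶ 0` exact and `Iₖ`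
injective. Applying `Γ = H⁰_𝔞` gives an exact sequence
`0 ⟶ Γ(Cₖ) ⟶ Γ(Iₖ) ⟶ Γ(Cₖ₊₁) ⟶ H¹_𝔞(Cₖ) ⟶ 0` in which `Γ(Iₖ)` is injective, by the Artin-Rees
lemma, and `H¹_𝔞(Cₖ) ≅ Hᵏ⁺¹_𝔞(M)`. Up to a shift of degree, the modules `Extʲ(R/𝔞, Γ(Cₖ))` are
therefore built from the `Extʲ(R/𝔞, Hⁱ_𝔞(M))` with `i ≤ k`. It remains to control
`Ext¹(R/𝔞, Γ(Cₛ))`: it embeds into `Ext¹(R/𝔞, Cₛ) ≅ Extˢ⁺¹(R/𝔞, M)`, because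
`Hom(R/𝔞, Cₛ/Γ(Cₛ)) = 0`.
-/

section

open Limits ComposableArrows

section Exactness
variable {C D : Type*} [Category* C] [Category* D] [Abelian D]

lemma exact_of_evaluation {S : ShortComplex (C ⥤ D)}
    (h : ∀ X, (S.map ((evaluation C D).obj X)).Exact) : S.Exact := by
  rw [ShortComplex.exact_iff_isZero_homology, Functor.isZero_iff]
  intro X
  exact (((S.map _).exact_iff_isZero_homology).1 (h X)).of_iso
    (S.mapHomologyIso ((evaluation C D).obj X)).symm

lemma exact_mk₅_of_evaluation {F₀ F₁ F₂ F₃ F₄ F₅ : C ⥤ D} {α₁ : F₀ ⟶ F₁} {α₂ : F₁ ⟶ F₂}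
    {α₃ : F₂ ⟶ F₃} {α₄ : F₃ ⟶ F₄} {α₅ : F₄ ⟶ F₅}
    (h : ∀ X, (mk₅ (α₁.app X) (α₂.app X) (α₃.app X) (α₄.app X) (α₅.app X)).Exact) :
    (mk₅ α₁ α₂ α₃ α₄ α₅).Exact where
  zero i hi := by
    ext X
    have h_zero := (h X).zero i
    have : i < 4 := by lia
    interval_cases i <;> exact h_zero
  exact i hi := exact_of_evaluation fun X => by
    have h_exact := (h X).exact i
    have : i < 4 := by lia
    interval_cases i <;> exact h_exact

lemma exact_mk₅_map {E : Type*} [Category* E] [Abelian E] {X₀ X₁ X₂ X₃ X₄ X₅ : D}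
    {f₁ : X₀ ⟶ X₁} {f₂ : X₁ ⟶ X₂} {f₃ : X₂ ⟶ X₃} {f₄ : X₃ ⟶ X₄} {f₅ : X₄ ⟶ X₅}
    (h : (mk₅ f₁ f₂ f₃ f₄ f₅).Exact) (Φ : D ⥤ E) [Φ.PreservesZeroMorphisms]
    [Φ.PreservesHomology] :
    (mk₅ (Φ.map f₁) (Φ.map f₂) (Φ.map f₃) (Φ.map f₄) (Φ.map f₅)).Exact :=
  exact_of_δ₀ ((h.exact 0).map Φ).exact_toComposableArrows <|
    exact_of_δ₀ ((h.exact 1).map Φ).exact_toComposableArrows <|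
      exact_of_δ₀ ((h.exact 2).map Φ).exact_toComposableArrows
        ((h.exact 3).map Φ).exact_toComposableArrows

lemma exact_mk₅_unop {X₀ X₁ X₂ X₃ X₄ X₅ : Dᵒᵖ} {f₁ : X₀ ⟶ X₁} {f₂ : X₁ ⟶ X₂} {f₃ : X₂ ⟶ X₃}
    {f₄ : X₃ ⟶ X₄} {f₅ : X₄ ⟶ X₅} (h : (mk₅ f₁ f₂ f₃ f₄ f₅).Exact) :
    (mk₅ f₅.unop f₄.unop f₃.unop f₂.unop f₁.unop).Exact :=
  exact_of_δ₀ (h.exact 3).unop.exact_toComposableArrows <|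
    exact_of_δ₀ (h.exact 2).unop.exact_toComposableArrows <|
      exact_of_δ₀ (h.exact 1).unop.exact_toComposableArrows
        (h.exact 0).unop.exact_toComposableArrows

end Exactness

section LeftDerived
variable {C D : Type*} [Category* C] [Abelian C] [Category* D] [Abelian D]

namespace LeftDerived
variable (S : ShortComplex (C ⥤ D)) [S.X₁.Additive] [S.X₂.Additive] [S.X₃.Additive]

/-- The sequence `S(K)` of chain complexes obtained by applying a sequence `S` of additive functors
to a chain complex `K`. -/
def complexSequence (K : ChainComplex C ℕ) : ShortComplex (ChainComplex D ℕ) where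
  f := (NatTrans.mapHomologicalComplex S.f _).app K
  g := (NatTrans.mapHomologicalComplex S.g _).app K
  zero := by
    ext i
    exact NatTrans.congr_app S.zero (K.X i)

/-- The morphism `S(φ) : S(K) ⟶ S(L)` induced by a chain map `φ : K ⟶ L`. -/
def complexSequenceMap {K L : ChainComplex C ℕ} (φ : K ⟶ L) :
    complexSequence S K ⟶ complexSequence S L where
  τ₁ := (S.X₁.mapHomologicalComplex _).map φ
  τ₂ := (S.X₂.mapHomologicalComplex _).map φ
  τ₃ := (S.X₃.mapHomologicalComplex _).map φ
  comm₁₂ := (NatTrans.mapHomologicalComplex S.f _).naturality φ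
  comm₂₃ := (NatTrans.mapHomologicalComplex S.g _).naturality φ

variable {S}
lemma complexSequence_shortExact
    (hS : ∀ (P : C) [Projective P], (S.map ((evaluation C D).obj P)).ShortExact)
    (K : ChainComplex C ℕ) [∀ i, Projective (K.X i)] : (complexSequence S K).ShortExact :=
  HomologicalComplex.shortExact_of_degreewise_shortExact _ fun i => hS (K.X i)

variable [HasProjectiveResolutions C]
  (hS : ∀ (P : C) [Projective P], (S.map ((evaluation C D).obj P)).ShortExact)

/-- The connecting morphism of left derived functors in the functor variable, for a sequence of
functors that is short exact on projective objects. -/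
noncomputable def δ (n : ℕ) : S.X₃.leftDerived (n + 1) ⟶ S.X₁.leftDerived n where
  app X := ((projectiveResolution X).isoLeftDerivedObj S.X₃ (n + 1)).hom ≫
    (complexSequence_shortExact hS (projectiveResolution X).complex).δ (n + 1) n (by simp) ≫
      ((projectiveResolution X).isoLeftDerivedObj S.X₁ n).inv
  naturality X Y f := by
    let φ := ProjectiveResolution.lift f (projectiveResolution X) (projectiveResolution Y)
    have hφ := ProjectiveResolution.lift_commutes_zero f (projectiveResolution X)
      (projectiveResolution Y)
    have hδ := HomologicalComplex.HomologySequence.δ_naturality (complexSequenceMap S φ)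
      (complexSequence_shortExact hS _) (complexSequence_shortExact hS _) (n + 1) n (by simp)
    have square₃ : CommSq _ _ _ _ :=
      ⟨(ProjectiveResolution.isoLeftDerivedObj_hom_naturality f _ _ φ hφ S.X₃ (n + 1)).symm⟩
    have square₁ : CommSq _ _ _ _ :=
      ⟨(ProjectiveResolution.isoLeftDerivedObj_inv_naturality f _ _ φ hφ S.X₁ n)⟩
    exact (square₃.horiz_comp (CommSq.horiz_comp ⟨hδ⟩ square₁)).w.symm

lemma homologyMap_comp_isoLeftDerivedObj_inv {F G : C ⥤ D} [F.Additive] [G.Additive] (α : F ⟶ G)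
    {X : C} (P : ProjectiveResolution X) (n : ℕ) :
    HomologicalComplex.homologyMap ((NatTrans.mapHomologicalComplex α _).app P.complex) n ≫
        (P.isoLeftDerivedObj G n).inv =
      (P.isoLeftDerivedObj F n).inv ≫ (NatTrans.leftDerived α n).app X :=
  ((Iso.inv_comp_eq _).2 (P.leftDerived_app_eq α n)).symm

lemma exact (n : ℕ) :
    (mk₅ (NatTrans.leftDerived S.f (n + 1)) (NatTrans.leftDerived S.g (n + 1)) (δ hS n)
      (NatTrans.leftDerived S.f n) (NatTrans.leftDerived S.g n)).Exact := by
  refine exact_mk₅_of_evaluation fun X => exact_of_iso ?_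
    (HomologicalComplex.HomologySequence.composableArrows₅_exact
      (complexSequence_shortExact hS (projectiveResolution X).complex) (n + 1) n (by simp))
  let P := projectiveResolution X
  exact isoMk₅ (P.isoLeftDerivedObj S.X₁ (n + 1)).symm (P.isoLeftDerivedObj S.X₂ (n + 1)).symm
    (P.isoLeftDerivedObj S.X₃ (n + 1)).symm (P.isoLeftDerivedObj S.X₁ n).symm
    (P.isoLeftDerivedObj S.X₂ n).symm (P.isoLeftDerivedObj S.X₃ n).symm
    (homologyMap_comp_isoLeftDerivedObj_inv S.f P (n + 1))
    (homologyMap_comp_isoLeftDerivedObj_inv S.g P (n + 1))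
    ((Iso.inv_hom_id_assoc (P.isoLeftDerivedObj S.X₃ (n + 1)) _).symm)
    (homologyMap_comp_isoLeftDerivedObj_inv S.f P n)
    (homologyMap_comp_isoLeftDerivedObj_inv S.g P n)

include hS in
lemma epi_map_zero : Epi (NatTrans.leftDerived S.g 0) := by
  have (X : C) : Epi ((NatTrans.leftDerived S.g 0).app X) := by
    have := (complexSequence_shortExact hS (projectiveResolution X).complex).epi_g
    have := HomologicalComplex.epi_homologyMap_of_epi_of_not_rel
      (complexSequence S (projectiveResolution X).complex).g 0 (by simp)
    rw [(projectiveResolution X).leftDerived_app_eq]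
    exact epi_comp' inferInstance (epi_comp' this inferInstance)
  exact NatTrans.epi_of_epi_app _

end LeftDerived

end LeftDerived

section DeltaFunctor
variable {C D E : Type*} [Category* C] [Abelian C] [Category* D] [Abelian D]
  [Category* E] [Abelian E]

/-- A sequence of functors `Hⁿ` with `H⁰` left exact, long exact sequences, and vanishing of the
positive `Hⁿ` on injectives: the data of right derived functors used for dimension shifting. The
connecting morphisms are not required to be natural. -/
structure IsEffaceableDeltaFunctor (H : ℕ → C ⥤ D) : Prop where
  mono_map {T : ShortComplex C} (hT : T.ShortExact) : Mono ((H 0).map T.f)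
  exists_exact {T : ShortComplex C} (hT : T.ShortExact) (n : ℕ) :
    ∃ δ : (H n).obj T.X₃ ⟶ (H (n + 1)).obj T.X₁,
      (mk₅ ((H n).map T.f) ((H n).map T.g) δ ((H (n + 1)).map T.f) ((H (n + 1)).map T.g)).Exact
  isZero_of_injective (I : C) [Injective I] (n : ℕ) : IsZero ((H (n + 1)).obj I)

namespace IsEffaceableDeltaFunctor
variable {H : ℕ → C ⥤ D}

lemma of_iso (hH : IsEffaceableDeltaFunctor H) {H' : ℕ → C ⥤ D} (e : ∀ n, H n ≅ H' n) :
    IsEffaceableDeltaFunctor H' where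
  mono_map {T} hT := by
    have := hH.mono_map hT
    rw [← NatIso.naturality_1 (e 0)]
    infer_instance
  exists_exact {T} hT n := by
    obtain ⟨δ, hδ⟩ := hH.exists_exact hT n
    exact ⟨(e n).inv.app _ ≫ δ ≫ (e (n + 1)).hom.app _, exact_of_iso
      (isoMk₅ ((e n).app _) ((e n).app _) ((e n).app _) ((e (n + 1)).app _)
        ((e (n + 1)).app _) ((e (n + 1)).app _) ((e n).hom.naturality _)
        ((e n).hom.naturality _) (Iso.hom_inv_id_app_assoc (e n) _ _).symm
        ((e (n + 1)).hom.naturality _) ((e (n + 1)).hom.naturality _)) hδ⟩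
  isZero_of_injective I _ n := (hH.isZero_of_injective I n).of_iso ((e (n + 1)).symm.app I)

lemma comp (hH : IsEffaceableDeltaFunctor H) (Φ : D ⥤ E) [Φ.PreservesZeroMorphisms]
    [PreservesFiniteLimits Φ] [PreservesFiniteColimits Φ] :
    IsEffaceableDeltaFunctor fun n => H n ⋙ Φ where
  mono_map hT := by
    have := hH.mono_map hT
    exact Φ.map_mono _
  exists_exact hT n := by
    obtain ⟨δ, hδ⟩ := hH.exists_exact hT n
    exact ⟨Φ.map δ, exact_mk₅_map hδ Φ⟩
  isZero_of_injective I _ n := Φ.map_isZero (hH.isZero_of_injective I n)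

lemma nonempty_iso_of_injective (hH : IsEffaceableDeltaFunctor H) {T : ShortComplex C}
    (hT : T.ShortExact) [Injective T.X₂] (n : ℕ) :
    Nonempty ((H (n + 1)).obj T.X₃ ≅ (H (n + 2)).obj T.X₁) := by
  obtain ⟨δ, hδ⟩ := hH.exists_exact hT (n + 1)
  have : IsIso δ := hδ.isIso_map' 1 (by lia)
    ((hH.isZero_of_injective T.X₂ n).eq_of_src _ _)
    ((hH.isZero_of_injective T.X₂ (n + 1)).eq_of_tgt _ _)
  exact ⟨asIso δ⟩

end IsEffaceableDeltaFunctor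

section Cosyzygy
variable [EnoughInjectives C]

/-- The `k`-th cosyzygy of `M` in the injective resolution built from `Injective.under`. -/
noncomputable def cosyzygy (M : C) : ℕ → C
  | 0 => M
  | k + 1 => cokernel (Injective.ι (cosyzygy M k))

/-- The sequence `0 ⟶ Cₖ ⟶ Iₖ ⟶ Cₖ₊₁ ⟶ 0` of consecutive cosyzygies of `M`. -/
noncomputable def cosyzygySequence (M : C) (k : ℕ) : ShortComplex C where
  X₁ := cosyzygy M k
  X₂ := Injective.under (cosyzygy M k)
  X₃ := cosyzygy M (k + 1)
  f := Injective.ι _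
  g := cokernel.π _
  zero := cokernel.condition _

lemma cosyzygySequence_shortExact (M : C) (k : ℕ) : (cosyzygySequence M k).ShortExact where
  exact := ShortComplex.exact_cokernel _
  mono_f := Injective.ι_mono _
  epi_g := coequalizer.π_epi

instance (M : C) (k : ℕ) : Injective (cosyzygySequence M k).X₂ :=
  inferInstanceAs (Injective (Injective.under _))

lemma IsEffaceableDeltaFunctor.nonempty_iso_cosyzygy {H : ℕ → C ⥤ D}
    (hH : IsEffaceableDeltaFunctor H) (M : C) (k n : ℕ) :
    Nonempty ((H (n + 1)).obj (cosyzygy M k) ≅ (H (k + n + 1)).obj M) := by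
  induction k generalizing n with
  | zero => exact ⟨eqToIso (by rw [Nat.zero_add]; rfl)⟩
  | succ k ih =>
    obtain ⟨e⟩ := hH.nonempty_iso_of_injective (cosyzygySequence_shortExact M k) n
    obtain ⟨e'⟩ := ih (n + 1)
    exact ⟨e ≪≫ e' ≪≫ eqToIso (by rw [Nat.add_right_comm k 1 n]; rfl)⟩

end Cosyzygy

namespace IsEffaceableDeltaFunctor

section ShortExact
variable {H : ℕ → C ⥤ D} (hH : IsEffaceableDeltaFunctor H) {T : ShortComplex C}
  (hT : T.ShortExact)
include hH hT

lemma exists_shortExact_of_injective [Injective T.X₂] :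
    ∃ (B : D) (p : (H 0).obj T.X₂ ⟶ B) (i : B ⟶ (H 0).obj T.X₃)
      (d : (H 0).obj T.X₃ ⟶ (H 1).obj T.X₁) (hp : (H 0).map T.f ≫ p = 0) (hd : i ≫ d = 0),
      (ShortComplex.mk _ p hp).ShortExact ∧ (ShortComplex.mk i d hd).ShortExact := by
  obtain ⟨d, hd⟩ := hH.exists_exact hT 0
  have := hH.mono_map hT
  have exact₂ : (ShortComplex.mk _ _ (hd.zero 0)).Exact := hd.exact 0
  have exact₃ : (ShortComplex.mk ((H 0).map T.g) d (hd.zero 1)).Exact := hd.exact 1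
  have : Epi d := (hd.exact 2).epi_f ((hH.isZero_of_injective T.X₂ 0).eq_of_tgt _ _)
  let p := cokernel.π ((H 0).map T.f)
  let i := cokernel.desc ((H 0).map T.f) ((H 0).map T.g) (hd.zero 0)
  have hpi : p ≫ i = (H 0).map T.g := cokernel.π_desc _ _ _
  have hid : i ≫ d = 0 := by
    rw [← cancel_epi p, reassoc_of% hpi, comp_zero]
    exact hd.zero 1
  have : Epi p := coequalizer.π_epi
  have : Mono i := exact₂.mono_cokernelDesc
  let φ : ShortComplex.mk ((H 0).map T.g) d (hd.zero 1) ⟶ ShortComplex.mk i d hid :=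
    { τ₁ := p, τ₂ := 𝟙 _, τ₃ := 𝟙 _, comm₁₂ := hpi.trans (Category.comp_id _).symm }
  exact ⟨_, p, i, d, cokernel.condition _, hid,
    .mk' (ShortComplex.exact_cokernel _) inferInstance inferInstance,
    .mk' ((ShortComplex.exact_iff_of_epi_of_isIso_of_mono φ).1 exact₃) inferInstance
      inferInstance⟩

variable {P : ObjectProperty D} {n : ℕ}

lemma prop_X₃_iff_of_injective [P.IsClosedUnderIsomorphisms] [Injective T.X₂] :
    P ((H (n + 1)).obj T.X₃) ↔ P ((H (n + 2)).obj T.X₁) :=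
  P.prop_iff_of_iso (hH.nonempty_iso_of_injective hT n).some

variable [P.IsSerreClass]

lemma prop_X₂ (h₁ : P ((H n).obj T.X₁)) (h₃ : P ((H n).obj T.X₃)) : P ((H n).obj T.X₂) := by
  obtain ⟨δ, hδ⟩ := hH.exists_exact hT n
  exact P.prop_X₂_of_exact (hδ.exact 0) h₁ h₃

lemma prop_X₃ (h₂ : P ((H n).obj T.X₂)) (h₁ : P ((H (n + 1)).obj T.X₁)) :
    P ((H n).obj T.X₃) := by
  obtain ⟨δ, hδ⟩ := hH.exists_exact hT n
  exact P.prop_X₂_of_exact (hδ.exact 1) h₂ h₁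

lemma prop_X₁ (h₃ : P ((H n).obj T.X₃)) (h₂ : P ((H (n + 1)).obj T.X₂)) :
    P ((H (n + 1)).obj T.X₁) := by
  obtain ⟨δ, hδ⟩ := hH.exists_exact hT n
  exact P.prop_X₂_of_exact (hδ.exact 2) h₃ h₂

end ShortExact

section Composite
variable {Γ : ℕ → C ⥤ D} (hΓ : IsEffaceableDeltaFunctor Γ) [(Γ 0).PreservesInjectiveObjects]
  {F : ℕ → D ⥤ E} (hF : IsEffaceableDeltaFunctor F) {P : ObjectProperty E} [P.IsSerreClass]
include hΓ hF

lemma prop_comp_zero_X₃ {T : ShortComplex C} (hT : T.ShortExact) [Injective T.X₂] {j : ℕ}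
    (h₀ : P ((F (j + 2)).obj ((Γ 0).obj T.X₁))) (h₁ : P ((F (j + 1)).obj ((Γ 1).obj T.X₁))) :
    P ((F (j + 1)).obj ((Γ 0).obj T.X₃)) := by
  obtain ⟨B, p, i, d, hp, hd, hB, hB'⟩ := hΓ.exists_shortExact_of_injective hT
  have : Injective ((Γ 0).obj T.X₂) := (Γ 0).injective_obj _
  exact hF.prop_X₂ hB' ((hF.prop_X₃_iff_of_injective hB).2 h₀) h₁

lemma prop_comp_one_X₁ {T : ShortComplex C} (hT : T.ShortExact) [Injective T.X₂] {j : ℕ}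
    (h₃ : P ((F (j + 1)).obj ((Γ 0).obj T.X₃))) (h₁ : P ((F (j + 3)).obj ((Γ 0).obj T.X₁))) :
    P ((F (j + 1)).obj ((Γ 1).obj T.X₁)) := by
  obtain ⟨B, p, i, d, hp, hd, hB, hB'⟩ := hΓ.exists_shortExact_of_injective hT
  have : Injective ((Γ 0).obj T.X₂) := (Γ 0).injective_obj _
  exact hF.prop_X₃ hB' h₃ ((hF.prop_X₃_iff_of_injective hB).2 h₁)

variable [EnoughInjectives C]

lemma prop_comp_zero_cosyzygy {M : C} {j k : ℕ}
    (h : ∀ i l, i + l = k → P ((F (j + l + 1)).obj ((Γ i).obj M))) :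
    P ((F (j + 1)).obj ((Γ 0).obj (cosyzygy M k))) := by
  induction k generalizing j with
  | zero => exact h 0 0 rfl
  | succ k ih =>
    refine prop_comp_zero_X₃ hΓ hF (cosyzygySequence_shortExact M k) (ih fun i l hil => ?_) ?_
    · rw [Nat.add_right_comm j 1 l]
      exact h i (l + 1) (by rw [← hil, Nat.add_assoc])
    · obtain ⟨e⟩ := hΓ.nonempty_iso_cosyzygy M k 0
      exact P.prop_of_iso ((F (j + 1)).mapIso e).symm (h (k + 1) 0 rfl)

end Composite

theorem prop_one_comp_of_prop_succ [EnoughInjectives C] {Γ : ℕ → C ⥤ C}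
    (hΓ : IsEffaceableDeltaFunctor Γ) [(Γ 0).PreservesInjectiveObjects] {F : ℕ → C ⥤ D}
    (hF : IsEffaceableDeltaFunctor F) {P : ObjectProperty D} [P.IsSerreClass]
    (h_zero : ∀ X, P ((F 1).obj X) → P ((F 1).obj ((Γ 0).obj X))) {M : C} {s : ℕ}
    (hM : P ((F (s + 1)).obj M))
    (h : ∀ i < s, ∀ j, i + j = s + 2 → P ((F j).obj ((Γ i).obj M))) :
    P ((F 1).obj ((Γ s).obj M)) := by
  cases s with
  | zero => exact h_zero M hM
  | succ k =>
    obtain ⟨eF⟩ := hF.nonempty_iso_cosyzygy M (k + 1) 0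
    obtain ⟨eΓ⟩ := hΓ.nonempty_iso_cosyzygy M k 0
    refine P.prop_of_iso ((F 1).mapIso eΓ)
      (prop_comp_one_X₁ hΓ hF (cosyzygySequence_shortExact M k) (j := 0) ?_ ?_)
    · exact h_zero _ (P.prop_of_iso eF.symm hM)
    · exact prop_comp_zero_cosyzygy hΓ hF (j := 2) fun i l hil => h i (by lia) _ (by lia)

end IsEffaceableDeltaFunctor

end DeltaFunctor

section Ext
variable {A : Type*} [Ring A] {C : Type*} [Category* C] [Abelian C] [Linear A C]

lemma shortExact_map_linearCoyoneda_of_projective {T : ShortComplex C} (hT : T.ShortExact)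
    (P : C) [Projective P] :
    (T.map ((linearCoyoneda A C).obj (Opposite.op P))).ShortExact := by
  have := hT.mono_f
  have := hT.epi_g
  refine ShortComplex.ShortExact.mk' ?_ ?_ ?_
  · rw [ShortComplex.moduleCat_exact_iff]
    intro (φ : P ⟶ T.X₂) (hφ : φ ≫ T.g = 0)
    exact ⟨hT.exact.lift φ hφ, hT.exact.lift_f φ hφ⟩
  · rw [ModuleCat.mono_iff_injective]
    exact fun (φ ψ : P ⟶ T.X₁) (h : φ ≫ T.f = ψ ≫ T.f) => (cancel_mono T.f).1 h
  · rw [ModuleCat.epi_iff_surjective]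
    exact fun (φ : P ⟶ T.X₃) => ⟨Projective.factorThru φ T.g, Projective.factorThru_comp φ T.g⟩

variable (A) in
/-- The sequence `Hom(-, T₃) ⟶ Hom(-, T₂) ⟶ Hom(-, T₁)` with values in the opposite category of
modules; `Ext A C` is defined through the left derived functors of its terms. -/
def linearYonedaRightOpSequence (T : ShortComplex C) : ShortComplex (C ⥤ (ModuleCat A)ᵒᵖ) where
  f := NatTrans.rightOp ((linearYoneda A C).map T.g)
  g := NatTrans.rightOp ((linearYoneda A C).map T.f)
  zero := by
    ext X
    refine Quiver.Hom.unop_inj (ModuleCat.hom_ext (LinearMap.ext fun (φ : X ⟶ T.X₁) => ?_))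
    change (φ ≫ T.f) ≫ T.g = 0
    rw [Category.assoc, T.zero, comp_zero]

instance (T : ShortComplex C) : (linearYonedaRightOpSequence A T).X₁.Additive :=
  inferInstanceAs ((linearYoneda A C).obj T.X₃).rightOp.Additive

instance (T : ShortComplex C) : (linearYonedaRightOpSequence A T).X₂.Additive :=
  inferInstanceAs ((linearYoneda A C).obj T.X₂).rightOp.Additive

instance (T : ShortComplex C) : (linearYonedaRightOpSequence A T).X₃.Additive :=
  inferInstanceAs ((linearYoneda A C).obj T.X₁).rightOp.Additive

lemma linearYonedaRightOpSequence_shortExact {T : ShortComplex C} (hT : T.ShortExact) (P : C)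
    [Projective P] :
    ((linearYonedaRightOpSequence A T).map ((evaluation C (ModuleCat A)ᵒᵖ).obj P)).ShortExact :=
  (shortExact_map_linearCoyoneda_of_projective hT P).op

variable [EnoughProjectives C]

lemma isZero_ext_succ_of_injective (X I : C) [Injective I] (n : ℕ) :
    IsZero (((Ext A C (n + 1)).obj (Opposite.op X)).obj I) := by
  refine IsZero.of_iso ?_ ((projectiveResolution X).isoExt (n + 1) I)
  rw [← HomologicalComplex.exactAt_iff_isZero_homology,
    HomologicalComplex.exactAt_iff' _ n (n + 1) (n + 2) (by simp) (by simp),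
    ShortComplex.moduleCat_exact_iff]
  intro (φ : (projectiveResolution X).complex.X (n + 1) ⟶ I)
    (hφ : (projectiveResolution X).complex.d (n + 2) (n + 1) ≫ φ = 0)
  have exact_succ := (projectiveResolution X).complex_exactAt_succ n
  rw [HomologicalComplex.exactAt_iff' _ (n + 2) (n + 1) n (by simp) (by simp)] at exact_succ
  exact ⟨exact_succ.descToInjective φ hφ, exact_succ.comp_descToInjective φ hφ⟩

variable (A C) in
theorem isEffaceableDeltaFunctor_ext_flip :
    IsEffaceableDeltaFunctor fun n => (Ext A C n).flip where
  mono_map {T} hT := by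
    have := LeftDerived.epi_map_zero (linearYonedaRightOpSequence_shortExact (A := A) hT)
    have (X : Cᵒᵖ) : Mono (((Ext A C 0).flip.map T.f).app X) :=
      unop_mono_of_epi ((NatTrans.leftDerived (linearYonedaRightOpSequence A T).g 0).app X.unop)
    exact NatTrans.mono_of_mono_app _
  exists_exact {T} hT n := by
    let hS := linearYonedaRightOpSequence_shortExact (A := A) hT
    refine ⟨NatTrans.leftOp (LeftDerived.δ hS n), exact_mk₅_of_evaluation fun X => ?_⟩
    have := exact_mk₅_unop
      (exact_mk₅_map (LeftDerived.exact hS n) ((evaluation C (ModuleCat A)ᵒᵖ).obj X.unop))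
    exact this
  isZero_of_injective I _ n :=
    (Functor.isZero_iff _).2 fun X => isZero_ext_succ_of_injective X.unop I n

theorem isEffaceableDeltaFunctor_ext (N : C) :
    IsEffaceableDeltaFunctor fun n => (Ext A C n).obj (Opposite.op N) :=
  ((isEffaceableDeltaFunctor_ext_flip A C).comp
    ((evaluation Cᵒᵖ (ModuleCat A)).obj (Opposite.op N))).of_iso fun _ => Iso.refl _

instance preservesFiniteLimits_linearYoneda (Y : C) :
    PreservesFiniteLimits ((linearYoneda A C).obj Y) := by
  have : PreservesLimits ((linearYoneda A C).obj Y ⋙ forget (ModuleCat A)) :=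
    inferInstanceAs (PreservesLimits (yoneda.obj Y))
  have : PreservesFiniteLimits ((linearYoneda A C).obj Y ⋙ forget (ModuleCat A)) :=
    PreservesLimits.preservesFiniteLimits _
  exact ⟨fun J _ _ => preservesLimitsOfShape_of_reflects_of_preserves _ (forget (ModuleCat A))⟩

/-- The isomorphism `Ext⁰(-, Y) ≅ Hom(-, Y)`. -/
noncomputable def extZeroIso (Y : C) : (Ext A C 0).flip.obj Y ≅ (linearYoneda A C).obj Y :=
  have := preservesFiniteColimits_rightOp ((linearYoneda A C).obj Y)
  let e := ((linearYoneda A C).obj Y).rightOp.leftDerivedZeroIsoSelf.symm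
  NatIso.ofComponents (fun X => (e.app X.unop).unop)
    fun f => Quiver.Hom.op_inj (e.hom.naturality f.unop).symm

end Ext

section LocalCohomology
variable {R} (𝔞 : Ideal R)

open localCohomology

instance : HasExactColimitsOfShape ℕᵒᵖᵒᵖ (ModuleCat.{u} R) :=
  have : AB5OfSize.{0, 0} (ModuleCat.{u} R) := AB5OfSize_of_univLE.{0, 0, u, u} _
  inferInstance

/-- `Hⁱ_𝔞` as a single functor: the colimit over `t` of `Extⁱ(R/𝔞ᵗ, -)`. -/
noncomputable def localCohomologyIso (i : ℕ) :
    localCohomology 𝔞 i ≅ (Ext R (ModuleCat.{u} R) i).flip ⋙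
      (Functor.whiskeringLeft _ _ _).obj (ringModIdeals (idealPowersDiagram 𝔞)).op ⋙ colim :=
  colimitIsoFlipCompColim _

theorem isEffaceableDeltaFunctor_localCohomology :
    IsEffaceableDeltaFunctor fun i => localCohomology 𝔞 i :=
  ((isEffaceableDeltaFunctor_ext_flip R (ModuleCat.{u} R)).comp
    ((Functor.whiskeringLeft _ _ _).obj (ringModIdeals (idealPowersDiagram 𝔞)).op ⋙ colim)).of_iso
      fun i => (localCohomologyIso 𝔞 i).symm

end LocalCohomology

section Torsion
variable {A M : Type*} [CommRing A] [AddCommGroup M] [Module A M]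

lemma apply_one_mem_torsionBySet {I : Ideal A} (φ : A ⧸ I →ₗ[A] M) :
    φ 1 ∈ Submodule.torsionBySet A M I := by
  rw [Submodule.mem_torsionBySet_iff]
  intro a
  rw [← map_smul, Algebra.smul_def, mul_one, Ideal.Quotient.algebraMap_eq,
    Ideal.Quotient.eq_zero_iff_mem.2 a.2, map_zero]

lemma linearMap_quotient_ext {I : Ideal A} {φ ψ : A ⧸ I →ₗ[A] M} (h : φ 1 = ψ 1) : φ = ψ :=
  Submodule.linearMap_qext _ (LinearMap.ext_ring h)

lemma exists_apply_one_eq {I : Ideal A} {x : M} (hx : x ∈ Submodule.torsionBySet A M I) :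
    ∃ φ : A ⧸ I →ₗ[A] M, φ 1 = x := by
  rw [Submodule.mem_torsionBySet_iff] at hx
  exact ⟨Submodule.liftQ I (LinearMap.toSpanSingleton A M x) fun a ha => hx ⟨a, ha⟩,
    one_smul A x⟩

end Torsion

section PrimaryComponent
universe v w
variable {A : Type u} [CommRing A] {𝔞 : Ideal A} {M : Type v} [AddCommGroup M] [Module A M]

lemma exists_le_torsionBySet_of_fg {N : Submodule A M} (hN : N.FG)
    (h : N ≤ 𝔞.primaryComponent M) : ∃ n : ℕ, N ≤ Submodule.torsionBySet A M ↑(𝔞 ^ n) := by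
  have h_mono : Monotone fun n : ℕ => Submodule.torsionBySet A M ↑(𝔞 ^ n) :=
    fun m n hmn => Submodule.torsionBySet_le_torsionBySet_pow m n hmn 𝔞
  obtain ⟨_, ⟨n, rfl⟩, hn⟩ := (CompleteLattice.isCompactElement_iff_le_of_directed_sSup_le _ N).1
    (N.fg_iff_compact.1 hN) _ (Set.range_nonempty _) h_mono.directed_le.directedOn_range h
  exact ⟨n, hn⟩

lemma primaryComponent_quotient_eq_top {I : Ideal A} {n : ℕ} (h : 𝔞 ^ n ≤ I) :
    𝔞.primaryComponent (A ⧸ I) = ⊤ := by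
  refine eq_top_iff.2 fun x _ => (Ideal.primaryComponent_mem _ 𝔞 x).2 ⟨n, ?_⟩
  obtain ⟨a, rfl⟩ := Ideal.Quotient.mk_surjective x
  refine (Submodule.mem_torsionBySet_iff _ _).2 fun r => ?_
  exact Ideal.Quotient.eq_zero_iff_mem.2 (I.mul_mem_right a (h r.2))

lemma primaryComponent_quotient_primaryComponent (h𝔞 : 𝔞.FG) :
    𝔞.primaryComponent (M ⧸ 𝔞.primaryComponent M) = ⊥ := by
  rw [eq_bot_iff]
  intro y hy
  obtain ⟨x, rfl⟩ := Submodule.mkQ_surjective _ y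
  obtain ⟨n, hn⟩ := (Ideal.primaryComponent_mem _ 𝔞 _).1 hy
  rw [Submodule.mem_torsionBySet_iff] at hn
  have h_le : Submodule.map (LinearMap.toSpanSingleton A M x) (𝔞 ^ n) ≤ 𝔞.primaryComponent M := by
    rintro _ ⟨a, ha, rfl⟩
    exact (Submodule.Quotient.mk_eq_zero _).1 (hn ⟨a, ha⟩)
  obtain ⟨m, hm⟩ := exists_le_torsionBySet_of_fg (Submodule.FG.map _ (h𝔞.pow (n := n))) h_le
  refine (Submodule.Quotient.mk_eq_zero _).2
    ((Ideal.primaryComponent_mem _ 𝔞 _).2 ⟨m + n, (Submodule.mem_torsionBySet_iff _ _).2 ?_⟩)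
  have h_pow : 𝔞 ^ (m + n) ≤ Ideal.torsionOf A M x := by
    rw [pow_add, Ideal.mul_le]
    intro a ha b hb
    rw [Ideal.mem_torsionOf_iff, mul_smul]
    exact (Submodule.mem_torsionBySet_iff _ _).1 (hm ⟨b, hb, rfl⟩) ⟨a, ha⟩
  exact fun a => h_pow a.2

lemma linearMap_eq_zero_of_primaryComponent {F : Type*} [AddCommGroup F] [Module A F]
    (hM : 𝔞.primaryComponent M = ⊤) (hF : 𝔞.primaryComponent F = ⊥) (φ : M →ₗ[A] F) : φ = 0 := by
  ext x
  have := Ideal.primaryComponent_map_mem 𝔞 φ ⟨x, hM ▸ Submodule.mem_top⟩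
  rwa [hF, Submodule.mem_bot] at this

lemma exists_quotient_extension [Small.{v} A] [Module.Injective A M] {P : Type w} [AddCommGroup P]
    [Module A P] {N K : Submodule A P} {f : N →ₗ[A] M}
    (hf : K.comap N.subtype ≤ LinearMap.ker f) :
    ∃ h : P ⧸ K →ₗ[A] M, ∀ x : N, h (K.mkQ x) = f x := by
  let ι : N ⧸ K.comap N.subtype →ₗ[A] P ⧸ K := Submodule.mapQ _ K N.subtype le_rfl
  have hι : Function.Injective ι := by
    rw [← LinearMap.ker_eq_bot]
    exact Submodule.ker_liftQ_eq_bot _ _ _ (by rw [LinearMap.ker_comp, Submodule.ker_mkQ])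
  obtain ⟨h, hh⟩ := Module.Injective.extension_property A M _ _ ι hι (Submodule.liftQ _ f hf)
  exact ⟨h, fun x => LinearMap.congr_fun hh (Submodule.Quotient.mk x)⟩

section Injective
variable [IsNoetherianRing A]

lemma exists_comap_pow_smul_top_le_ker {P : Type*} [AddCommGroup P] [Module A P]
    [Module.Finite A P] {N : Submodule A P} {f : N →ₗ[A] M}
    (hf : LinearMap.range f ≤ 𝔞.primaryComponent M) :
    ∃ n : ℕ, (𝔞 ^ n • ⊤ : Submodule A P).comap N.subtype ≤ LinearMap.ker f := by
  have range_fg : (LinearMap.range f).FG := Module.Finite.iff_fg.1 inferInstance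
  obtain ⟨t, ht⟩ := exists_le_torsionBySet_of_fg range_fg hf
  obtain ⟨k, hk⟩ := 𝔞.exists_pow_inf_eq_pow_smul N
  have artin_rees : (𝔞 ^ (k + t) • ⊤ : Submodule A P) ⊓ N ≤ 𝔞 ^ t • N := by
    rw [hk _ (Nat.le_add_right k t), Nat.add_sub_cancel_left]
    exact Submodule.smul_mono le_rfl inf_le_right
  have smul_le_ker : 𝔞 ^ t • (⊤ : Submodule A N) ≤ LinearMap.ker f :=
    Submodule.smul_le.2 fun a ha x _ => by
      rw [LinearMap.mem_ker, map_smul]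
      exact (Submodule.mem_torsionBySet_iff _ _).1 (ht ⟨x, rfl⟩) ⟨a, ha⟩
  have smul_eq_map : 𝔞 ^ t • N = (𝔞 ^ t • ⊤ : Submodule A N).map N.subtype := by
    rw [Submodule.map_smul'', Submodule.map_subtype_top]
  refine ⟨k + t, fun x hx => smul_le_ker ?_⟩
  obtain ⟨y, hy, hyx⟩ := smul_eq_map ▸ artin_rees ⟨hx, x.2⟩
  exact Subtype.ext hyx ▸ hy

instance injective_primaryComponent [Small.{v} A] [Module.Injective A M] :
    Module.Injective A (𝔞.primaryComponent M) := by
  refine Module.Baer.injective fun 𝔟 g => ?_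
  obtain ⟨n, hn⟩ := exists_comap_pow_smul_top_le_ker (𝔞 := 𝔞)
    (f := (𝔞.primaryComponent M).subtype ∘ₗ g) <| by
      rintro _ ⟨b, rfl⟩
      exact (g b).2
  rw [smul_eq_mul, Ideal.mul_top] at hn
  obtain ⟨h, hh⟩ := exists_quotient_extension hn
  let x : 𝔞.primaryComponent M :=
    ⟨h 1, (Ideal.primaryComponent_mem _ 𝔞 _).2 ⟨n, apply_one_mem_torsionBySet h⟩⟩
  refine ⟨LinearMap.toSpanSingleton A _ x, fun b hb => Subtype.ext ?_⟩
  calc b • h 1 = h (b • 1) := (map_smul h b 1).symm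
    _ = h ((𝔞 ^ n).mkQ b) := congr_arg (h ∘ (𝔞 ^ n).mkQ) (mul_one b)
    _ = g ⟨b, hb⟩ := hh ⟨b, hb⟩

end Injective

end PrimaryComponent

section LocalCohomologyZero
variable {R} (𝔞 : Ideal R) (M : ModuleCat.{u} R)
open localCohomology

/-- The cocone with components `Hom(R/𝔞ᵗ, M) ⟶ Γ_𝔞(M)`, `φ ↦ φ 1`. -/
@[simps pt]
noncomputable def evalOneCocone :
    Cocone ((ringModIdeals (idealPowersDiagram 𝔞)).op ⋙ (linearYoneda R (ModuleCat.{u} R)).obj M)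
    where
  pt := ModuleCat.of R (𝔞.primaryComponent M)
  ι.app t := ModuleCat.ofHom
    { toFun (φ : ModuleCat.of R (R ⧸ 𝔞 ^ t.unop.unop) ⟶ M) := ⟨φ.hom (1 : R ⧸ 𝔞 ^ t.unop.unop),
        (Ideal.primaryComponent_mem _ 𝔞 _).2 ⟨t.unop.unop, apply_one_mem_torsionBySet φ.hom⟩⟩
      map_add' _ _ := rfl
      map_smul' _ _ := rfl }

/-- `Γ_𝔞(M)` is the colimit over `t` of `Hom(R/𝔞ᵗ, M)`. -/
noncomputable def isColimitEvalOneCocone : IsColimit (evalOneCocone 𝔞 M) := by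
  have : PreservesFilteredColimitsOfSize.{0, 0} (forget (ModuleCat.{u} R)) :=
    preservesSmallestFilteredColimits_of_preservesFilteredColimits _
  have : ReflectsColimitsOfShape ℕᵒᵖᵒᵖ (forget (ModuleCat.{u} R)) :=
    reflectsColimitsOfShape_of_reflectsIsomorphisms
  refine isColimitOfReflects (forget (ModuleCat R)) (Types.FilteredColimit.isColimitOf' _ _ ?_ ?_)
  · intro ⟨x, hx⟩
    obtain ⟨n, hn⟩ := (Ideal.primaryComponent_mem _ 𝔞 x).1 hx
    obtain ⟨φ, rfl⟩ := exists_apply_one_eq hn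
    exact ⟨.op (.op n), ModuleCat.ofHom φ, rfl⟩
  · intro t φ ψ h
    exact ⟨t, 𝟙 t,
      congr_arg _ (ModuleCat.hom_ext (linearMap_quotient_ext (congr_arg Subtype.val h)))⟩

/-- The isomorphism `H⁰_𝔞(M) ≅ Γ_𝔞(M)`. -/
noncomputable def localCohomologyZeroIso :
    (localCohomology 𝔞 0).obj M ≅ ModuleCat.of R (𝔞.primaryComponent M) :=
  (localCohomologyIso 𝔞 0).app M ≪≫
    colim.mapIso (Functor.isoWhiskerLeft (ringModIdeals (idealPowersDiagram 𝔞)).op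
      (extZeroIso M)) ≪≫
      (colimit.isColimit _).coconePointUniqueUpToIso (isColimitEvalOneCocone 𝔞 M)

end LocalCohomologyZero

section TorsionModule
variable {R} (𝔞 : Ideal R)

instance preservesInjectiveObjects_localCohomology_zero [IsNoetherianRing R] :
    (localCohomology 𝔞 0).PreservesInjectiveObjects where
  injective_obj {I} hI := by
    have : Module.Injective R I := (Module.injective_iff_injective_object R I).2 hI
    have : Injective (ModuleCat.of R (𝔞.primaryComponent I)) :=
      (Module.injective_iff_injective_object R _).1 inferInstance
    exact Injective.of_iso (localCohomologyZeroIso 𝔞 I).symm this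

variable {𝔞} {N : ModuleCat.{u} R} (hN : 𝔞.primaryComponent N = ⊤)
include hN

lemma isZero_ext_zero_of_primaryComponent {F : ModuleCat.{u} R}
    (hF : 𝔞.primaryComponent F = ⊥) :
    IsZero (((Ext R (ModuleCat.{u} R) 0).obj (Opposite.op N)).obj F) := by
  have : Subsingleton (N ⟶ F) := subsingleton_of_forall_eq 0 fun f =>
    ModuleCat.hom_ext (linearMap_eq_zero_of_primaryComponent hN hF f.hom)
  have : Subsingleton (((linearYoneda R (ModuleCat R)).obj F).obj (Opposite.op N)) := this
  exact (ModuleCat.isZero_of_subsingleton _).of_iso ((extZeroIso F).app (Opposite.op N))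

lemma prop_ext_one_localCohomology_zero (h𝔞 : 𝔞.FG) {P : ObjectProperty (ModuleCat.{u} R)}
    [P.IsSerreClass] {M : ModuleCat.{u} R}
    (hM : P (((Ext R (ModuleCat.{u} R) 1).obj (Opposite.op N)).obj M)) :
    P (((Ext R (ModuleCat.{u} R) 1).obj (Opposite.op N)).obj ((localCohomology 𝔞 0).obj M)) := by
  let Γ := 𝔞.primaryComponent M
  have h_exact : Function.Exact Γ.subtype Γ.mkQ := LinearMap.exact_subtype_mkQ Γ
  have h_shortExact := ModuleCat.shortComplex_shortExact
    (ModuleCat.shortComplexOfCompEqZero _ _ h_exact.linearMap_comp_eq_zero) h_exact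
    Γ.subtype_injective Γ.mkQ_surjective
  have h_isZero := isZero_ext_zero_of_primaryComponent hN
    (F := ModuleCat.of R (M ⧸ Γ)) (primaryComponent_quotient_primaryComponent h𝔞)
  exact P.prop_of_iso
    (((Ext R (ModuleCat.{u} R) 1).obj (Opposite.op N)).mapIso (localCohomologyZeroIso 𝔞 M).symm)
    ((isEffaceableDeltaFunctor_ext (A := R) N).prop_X₁ h_shortExact (P.prop_of_isZero h_isZero) hM)

end TorsionModule

end

variable {R} in
open Limits ZeroObject in
lemma SerreClass.isSerreClass (S : SerreClass R) {X : ModuleCat.{u} R} (hX : S.P X) :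
    ObjectProperty.IsSerreClass S.P where
  exists_zero := ⟨0, isZero_zero _, S.mem_of_mono (0 : 0 ⟶ X) inferInstance hX⟩
  prop_of_mono f hf := S.mem_of_mono f hf
  prop_of_epi f hf := S.mem_of_epi f hf
  prop_X₂_of_shortExact := S.mem_of_extension _

theorem stmt4_general [IsNoetherianRing R] (𝔞 : Ideal R) (S : SerreClass R) (s : ℕ)
    {N : ModuleCat.{u} R} (hN : 𝔞.primaryComponent N = ⊤) (M : ModuleCat.{u} R)
    (h1 : S.P (extModule R (s + 1) N M))
    (h2 : ∀ i < s, ∀ j, i + j = s + 2 → S.P (extModule R j N ((localCohomology 𝔞 i).obj M))) :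
    S.P (extModule R 1 N ((localCohomology 𝔞 s).obj M)) := by
  have : ObjectProperty.IsSerreClass S.P := S.isSerreClass h1
  exact (isEffaceableDeltaFunctor_localCohomology 𝔞).prop_one_comp_of_prop_succ
    (isEffaceableDeltaFunctor_ext N)
    (fun _ => prop_ext_one_localCohomology_zero hN (IsNoetherian.noetherian 𝔞)) h1 h2

theorem stmt4 [IsNoetherianRing R] (𝔞 : Ideal R) (S : SerreClass R) (s : ℕ)
    (M : ModuleCat.{u} R)
    (h1 : S.P (extModule R (s + 1) (ModuleCat.of R (R ⧸ 𝔞)) M))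
    (h2 : ∀ i < s, ∀ j : ℕ,
      S.P (extModule R j (ModuleCat.of R (R ⧸ 𝔞)) ((localCohomology 𝔞 i).obj M))) :
    S.P (extModule R 1 (ModuleCat.of R (R ⧸ 𝔞)) ((localCohomology 𝔞 s).obj M)) :=
  stmt4_general R 𝔞 S s (primaryComponent_quotient_eq_top (pow_one 𝔞).le) M h1
    fun i hi j _ => h2 i hi j
end

section
/- Let R be a Noetherian ring, 𝔞 an ideal of R, and M a non-zero R-module with dim Supp(M) ≤ 1 and Supp(M) ⊆ V(𝔞). Then M is 𝔞-cofinite if and only if Hom_R(R/𝔞, M) and Ext^1_R(R/𝔞, M) are both finitely generated R-modules. -/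
open CategoryTheory

universe u

variable (R : Type u) [CommRing R]

/- For `x ∈ 𝔞` the chain `M ⊇ xM ⊇ x²M ⊇ ⋯` is studied through the subquotients `xⁿM ⧸ xⁿ⁺¹M`. As
`Hom(R ⧸ 𝔞, M)` is finitely generated with the same support as `M`, the localization of `M` at a
minimal prime `p` of `Supp M` is Artinian (Melkersson), so for large `n` no such `p` supports
`xⁿM ⧸ xⁿ⁺¹M`, whose support therefore has smaller dimension than `Supp M`. Unless
`𝔞 ≤ √(Ann M)`, when `M` itself is finite, one can choose `x ∉ √(Ann M)`; then the kernel of `xⁿ` on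
`M` and the kernel of `x` on `xⁿM` have larger annihilators than `M` and are handled by Noetherian
induction. Long exact sequences pass the finiteness of low-degree Ext modules down to these three
pieces, and the finiteness of all Ext modules back up to `M`, because `x` acts as zero on
`Ext(R ⧸ 𝔞, -)`. -/

section ExtModule

variable {R}
variable {X : ModuleCat.{u} R} (P : ProjectiveResolution X) (Y : ModuleCat.{u} R)

theorem projectiveResolution_extMk_zero_eq_zero_iff {f : P.complex.X 0 ⟶ Y}
    (hf : P.complex.d 1 0 ≫ f = 0) : P.extMk f 1 rfl hf = 0 ↔ f = 0 := by
  constructor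
  · intro h
    rw [← P.extEquivCohomologyClass.apply_eq_iff_eq,
      ProjectiveResolution.extEquivCohomologyClass_extMk,
      ProjectiveResolution.extEquivCohomologyClass_zero,
      CochainComplex.HomComplex.CohomologyClass.mk_eq_zero_iff,
      CochainComplex.HomComplex.Cocycle.toSingleMk_mem_coboundaries_iff _ _ _ _ _ 1
        (by simp)] at h
    obtain ⟨g, hg⟩ := h
    have hg0 : g = 0 :=
      (CochainComplex.isZero_of_isStrictlyLE P.cochainComplex 0 1 (by simp)).eq_of_src _ _
    rw [hg0, Limits.comp_zero] at hg
    rw [← cancel_epi (P.cochainComplexXIso (-(0 : ℕ)) 0 rfl).hom, ← hg, Limits.comp_zero]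
  · rintro rfl
    exact P.extMk_zero 1 rfl

/-- The linear map sending an `n`-cocycle of `Hom(P, Y)` to its class in `Ext^n(X, Y)`, for a
projective resolution `P` of `X`. -/
noncomputable def cocyclesToExt (n : ℕ) :
    LinearMap.ker (Linear.leftComp R Y (P.complex.d (n + 1) n)) →ₗ[R] Abelian.Ext X Y n where
  toFun f := P.extMk f.1 (n + 1) rfl f.2
  map_add' f g := (P.add_extMk ..).symm
  map_smul' r f := by
    rw [Abelian.Ext.smul_eq_comp_mk₀, RingHom.id_apply]
    refine Eq.trans ?_ (P.extMk_comp_mk₀ _ _ _ _ _).symm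
    congr 1

theorem cocyclesToExt_surjective (n : ℕ) : Function.Surjective (cocyclesToExt P Y n) := by
  intro e
  obtain ⟨f, hf, rfl⟩ := P.extMk_surjective e (n + 1) rfl
  exact ⟨⟨f, hf⟩, rfl⟩

theorem mem_ker_cocyclesToExt_iff {n : ℕ}
    {z : LinearMap.ker (Linear.leftComp R Y (P.complex.d (n + 1) n))} :
    z ∈ LinearMap.ker (cocyclesToExt P Y n) ↔
      ∃ y, (P.complex.linearYonedaObj R Y).d ((ComplexShape.up ℕ).prev n) n y = z.1 := by
  cases n with
  | zero =>
    have hd := HomologicalComplex.shape (P.complex.linearYonedaObj R Y)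
      ((ComplexShape.up ℕ).prev 0) 0 (by simp)
    refine (projectiveResolution_extMk_zero_eq_zero_iff P Y z.2).trans ?_
    rw [hd]
    exact ⟨fun h => ⟨0, h.symm⟩, fun ⟨_, h⟩ => h.symm⟩
  | succ n =>
    rw [show (ComplexShape.up ℕ).prev (n + 1) = n by simp]
    exact P.extMk_eq_zero_iff z.1 (n + 1 + 1) rfl z.2 n rfl

/-- The comparison between the derived functor `extModule` and Mathlib's `Abelian.Ext`, which
carries the long exact sequences. -/
noncomputable def extModuleEquiv (n : ℕ) (X Y : ModuleCat.{u} R) :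
    extModule R n X Y ≃ₗ[R] Abelian.Ext X Y n :=
  let P := projectiveResolution X
  let K := P.complex.linearYonedaObj R Y
  let S := K.sc' ((ComplexShape.up ℕ).prev n) n (n + 1)
  let e : extModule R n X Y ≅ S.moduleCatLeftHomologyData.H :=
    P.isoExt n Y ≪≫ K.homologyIsoSc' _ n (n + 1) rfl (by simp) ≪≫ S.moduleCatHomologyIso
  let c : LinearMap.ker S.g.hom →ₗ[R] Abelian.Ext X Y n := cocyclesToExt P Y n
  have range_eq_ker : LinearMap.range S.moduleCatToCycles = LinearMap.ker c := by
    ext z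
    refine Iff.trans ?_ (mem_ker_cocyclesToExt_iff P Y).symm
    exact exists_congr fun y => Subtype.ext_iff
  e.toLinearEquiv ≪≫ₗ Submodule.quotEquivOfEq _ _ range_eq_ker ≪≫ₗ
    c.quotKerEquivOfSurjective (cocyclesToExt_surjective P Y n)

end ExtModule

section ShortExact

variable {R} {M M' : Type u} [AddCommGroup M] [Module R M] [AddCommGroup M'] [Module R M']

theorem shortExact_subtype_mkQ (L : Submodule R M) :
    (ModuleCat.shortComplexOfCompEqZero L.subtype L.mkQ
      (LinearMap.exact_subtype_mkQ L).linearMap_comp_eq_zero).ShortExact :=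
  ModuleCat.shortComplex_shortExact _ (LinearMap.exact_subtype_mkQ L) L.subtype_injective
    L.mkQ_surjective

theorem exact_ker_subtype_rangeRestrict (f : M →ₗ[R] M') :
    Function.Exact (LinearMap.ker f).subtype f.rangeRestrict := by
  intro m
  simp [← Subtype.coe_inj]

theorem shortExact_ker_subtype_rangeRestrict (f : M →ₗ[R] M') :
    (ModuleCat.shortComplexOfCompEqZero (LinearMap.ker f).subtype f.rangeRestrict
      (exact_ker_subtype_rangeRestrict f).linearMap_comp_eq_zero).ShortExact :=
  ModuleCat.shortComplex_shortExact _ (exact_ker_subtype_rangeRestrict f)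
    (LinearMap.ker f).subtype_injective f.surjective_rangeRestrict

end ShortExact

section FiniteExt

variable {R}

theorem finite_of_exact [IsNoetherianRing R] {A B C : Type*} [AddCommGroup A] [AddCommGroup B]
    [AddCommGroup C] [Module R A] [Module R B] [Module R C] (f : A →ₗ[R] B) (g : B →ₗ[R] C)
    (h : Function.Exact f g) : Module.Finite R A → Module.Finite R C → Module.Finite R B :=
  fun _ _ =>
    have := isNoetherian_of_range_eq_ker f g h.linearMap_ker_eq.symm
    inferInstance

theorem ext_comp_smul_id_eq_zero {N Y : ModuleCat.{u} R} {i : ℕ} {x : R}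
    (hx : x ∈ Module.annihilator R N) (e : Abelian.Ext N Y i) :
    e.comp (Abelian.Ext.mk₀ (x • 𝟙 Y)) (add_zero i) = 0 :=
  congrArg (fun φ => φ.hom e) (Abelian.Ext.postcomp_smul_id_eq_zero_of_mem_annihilator hx i)

/-- Finite generation of the single module `Ext^i(N, M)`; cofiniteness asks for it at `N = R ⧸ 𝔞`
in every degree `i`. -/
def HasFiniteExt (N : ModuleCat.{u} R) (M : Type u) [AddCommGroup M] [Module R M] (i : ℕ) :
    Prop :=
  Module.Finite R (Abelian.Ext N (ModuleCat.of R M) i)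

namespace HasFiniteExt

variable {N : ModuleCat.{u} R} {S : ShortComplex (ModuleCat.{u} R)} {i : ℕ}

theorem zero_iff_finite_hom {M : Type u} [AddCommGroup M] [Module R M] :
    HasFiniteExt N M 0 ↔ Module.Finite R (N →ₗ[R] M) :=
  Module.Finite.equiv_iff (Abelian.Ext.linearEquiv₀ ≪≫ₗ ModuleCat.homLinearEquiv)

theorem finite_ker_postcomp (hS : S.ShortExact)
    (h₃ : ∀ j, j + 1 = i → HasFiniteExt N S.X₃ j) :
    Module.Finite R
      (LinearMap.ker ((Abelian.Ext.mk₀ S.f).postcompOfLinear R N (add_zero i))) := by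
  cases i with
  | zero =>
    have := hS.mono_f
    rw [LinearMap.ker_eq_bot.2 (Abelian.Ext.postcomp_mk₀_injective_of_mono N S.f)]
    infer_instance
  | succ j =>
    have h_exact : Function.Exact (hS.extClass.postcompOfLinear R N rfl)
        ((Abelian.Ext.mk₀ S.f).postcompOfLinear R N (add_zero (j + 1))) :=
      (ShortComplex.ab_exact_iff_function_exact _).1
        (Abelian.Ext.covariant_sequence_exact₁' N hS j (j + 1) rfl)
    have : Module.Finite R (Abelian.Ext N S.X₃ j) := h₃ j rfl
    rw [h_exact.linearMap_ker_eq]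
    infer_instance

variable [IsNoetherianRing R]

theorem of_finite [Module.Finite R N] (M : Type u) [AddCommGroup M] [Module R M]
    [Module.Finite R M] (i : ℕ) : HasFiniteExt N M i :=
  ModuleCat.finite_ext R N (ModuleCat.of R M) i

theorem middle (hS : S.ShortExact) (h₁ : HasFiniteExt N S.X₁ i) (h₃ : HasFiniteExt N S.X₃ i) :
    HasFiniteExt N S.X₂ i :=
  finite_of_exact ((Abelian.Ext.mk₀ S.f).postcompOfLinear R N (add_zero i))
    ((Abelian.Ext.mk₀ S.g).postcompOfLinear R N (add_zero i))
    ((ShortComplex.ab_exact_iff_function_exact _).1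
      (Abelian.Ext.covariant_sequence_exact₂' N hS i)) h₁ h₃

theorem right (hS : S.ShortExact) (h₂ : HasFiniteExt N S.X₂ i)
    (h₁ : HasFiniteExt N S.X₁ (i + 1)) : HasFiniteExt N S.X₃ i :=
  finite_of_exact ((Abelian.Ext.mk₀ S.g).postcompOfLinear R N (add_zero i))
    (hS.extClass.postcompOfLinear R N rfl)
    ((ShortComplex.ab_exact_iff_function_exact _).1
      (Abelian.Ext.covariant_sequence_exact₃' N hS i (i + 1) rfl)) h₂ h₁

theorem left (hS : S.ShortExact) (h₃ : ∀ j, j + 1 = i → HasFiniteExt N S.X₃ j)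
    (h₂ : HasFiniteExt N S.X₂ i) : HasFiniteExt N S.X₁ i :=
  finite_of_exact _ _ (LinearMap.exact_subtype_ker_map _) (finite_ker_postcomp hS h₃) h₂

section LinearMap

variable {M M' : Type u} [AddCommGroup M] [Module R M] [AddCommGroup M'] [Module R M']

theorem submodule_zero (L : Submodule R M) (h : HasFiniteExt N M 0) : HasFiniteExt N L 0 :=
  left (shortExact_subtype_mkQ L) (fun _ hj => absurd hj (Nat.succ_ne_zero _)) h

theorem quotient {L : Submodule R M} (h : HasFiniteExt N M i) (hL : HasFiniteExt N L (i + 1)) :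
    HasFiniteExt N (M ⧸ L) i :=
  right (shortExact_subtype_mkQ L) h hL

theorem ker_succ {f : M →ₗ[R] M'} (h : HasFiniteExt N M (i + 1))
    (hf : HasFiniteExt N (LinearMap.range f) i) : HasFiniteExt N (LinearMap.ker f) (i + 1) :=
  left (shortExact_ker_subtype_rangeRestrict f)
    (fun _ hj => Nat.succ_injective hj ▸ hf) h

theorem range {f : M →ₗ[R] M'} (h : HasFiniteExt N M i)
    (hf : HasFiniteExt N (LinearMap.ker f) (i + 1)) : HasFiniteExt N (LinearMap.range f) i :=
  right (shortExact_ker_subtype_rangeRestrict f) h hf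

theorem of_ker_of_range {f : M →ₗ[R] M'} (hker : HasFiniteExt N (LinearMap.ker f) i)
    (hrange : HasFiniteExt N (LinearMap.range f) i) : HasFiniteExt N M i :=
  middle (shortExact_ker_subtype_rangeRestrict f) hker hrange

/- Multiplication by `x` acts as zero on `Ext(N, M)` and factors through `xM`, so `Ext(N, M)` maps
to the kernel of `Ext(N, xM) → Ext(N, M)`, which is a quotient of `Ext(N, M ⧸ xM)` in one degree
lower. -/
theorem of_ker_lsmul_of_quotient {x : R} (hx : x ∈ Module.annihilator R N)
    (hker : HasFiniteExt N (LinearMap.ker (LinearMap.lsmul R M x)) i)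
    (hquot : ∀ j, j + 1 = i → HasFiniteExt N (M ⧸ LinearMap.range (LinearMap.lsmul R M x)) j) :
    HasFiniteExt N M i := by
  let μ := LinearMap.lsmul R M x
  let p : ModuleCat.of R M ⟶ ModuleCat.of R (LinearMap.range μ) := ModuleCat.ofHom μ.rangeRestrict
  let ι : ModuleCat.of R (LinearMap.range μ) ⟶ ModuleCat.of R M :=
    ModuleCat.ofHom (LinearMap.range μ).subtype
  let F := (Abelian.Ext.mk₀ ι).postcompOfLinear R N (add_zero i)
  let G := (Abelian.Ext.mk₀ p).postcompOfLinear R N (add_zero i)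
  have hFG (e) : F (G e) = 0 := by
    have hpι : p ≫ ι = x • 𝟙 (ModuleCat.of R M) := by ext m; rfl
    simpa [F, G, hpι] using ext_comp_smul_id_eq_zero hx e
  have hF : Module.Finite R (LinearMap.ker F) :=
    finite_ker_postcomp (shortExact_subtype_mkQ (LinearMap.range μ)) hquot
  have h_exact := (ShortComplex.ab_exact_iff_function_exact _).1
    (Abelian.Ext.covariant_sequence_exact₂' N (shortExact_ker_subtype_rangeRestrict μ) i)
  refine finite_of_exact ((Abelian.Ext.mk₀ (ModuleCat.ofHom
    (LinearMap.ker μ).subtype)).postcompOfLinear R N (add_zero i)) (G.codRestrict _ hFG) ?_ hker hF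
  exact fun e => Subtype.ext_iff.trans (h_exact e)

end LinearMap

end HasFiniteExt

end FiniteExt

section Torsion

variable {R} {M : Type*} [AddCommGroup M] [Module R M] (𝔞 : Ideal R)

/-- `Hom(R ⧸ 𝔞, M)` is the submodule of elements killed by `𝔞`, by evaluation at `1`. -/
def quotientHomEquivTorsionBySet : ((R ⧸ 𝔞) →ₗ[R] M) ≃ₗ[R] Submodule.torsionBySet R M 𝔞 where
  toFun f := ⟨f 1, (Submodule.mem_torsionBySet_iff _ _).2 fun r => by
    rw [← map_smul, Algebra.smul_def, mul_one]
    simp [Ideal.Quotient.eq_zero_iff_mem.2 r.2]⟩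
  map_add' _ _ := rfl
  map_smul' _ _ := rfl
  invFun m := 𝔞.liftQ (LinearMap.toSpanSingleton R M m.1) fun r hr => by
    simpa using (Submodule.mem_torsionBySet_iff _ _).1 m.2 ⟨r, hr⟩
  left_inv f := by
    ext
    simp
  right_inv m := by
    ext
    exact (Submodule.liftQ_apply 𝔞 _ 1).trans (one_smul R m.1)

theorem hasFiniteExt_zero_iff_torsionBySet_fg {M : Type u} [AddCommGroup M] [Module R M] :
    HasFiniteExt (ModuleCat.of R (R ⧸ 𝔞)) M 0 ↔
      (Submodule.torsionBySet R M 𝔞).FG :=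
  (HasFiniteExt.zero_iff_finite_hom.trans
    (Module.Finite.equiv_iff (quotientHomEquivTorsionBySet 𝔞))).trans Module.Finite.iff_fg

variable {𝔞} [IsNoetherianRing R]

theorem torsionBySet_pow_fg (h : (Submodule.torsionBySet R M 𝔞).FG) (k : ℕ) :
    (Submodule.torsionBySet R M (𝔞 ^ k : Ideal R)).FG := by
  induction k with
  | zero =>
    rw [pow_zero, Ideal.one_eq_top, Submodule.top_coe, Submodule.torsionBySet_univ]
    exact Submodule.fg_bot
  | succ k ih =>
    obtain ⟨s, rfl⟩ := IsNoetherian.noetherian 𝔞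
    let f : M →ₗ[R] (s → M) := LinearMap.pi fun x => LinearMap.lsmul R M x
    refine Submodule.fg_of_fg_map_of_fg_inf_ker f ?_ ?_
    · refine (Submodule.fg_pi fun _ : s => ih).of_le ?_
      rintro _ ⟨m, hm, rfl⟩ x -
      refine (Submodule.mem_torsionBySet_iff _ _).2 fun r => ?_
      have hrx : (r * x : R) ∈ Ideal.span (s : Set R) ^ (k + 1) :=
        pow_succ (Ideal.span (s : Set R)) k ▸ Ideal.mul_mem_mul r.2 (Ideal.subset_span x.2)
      simpa [f, mul_smul] using (Submodule.mem_torsionBySet_iff _ _).1 hm ⟨_, hrx⟩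
    · refine h.of_le fun m hm => ?_
      rw [← Submodule.torsionBySet_eq_torsionBySet_span]
      exact (Submodule.mem_torsionBySet_iff _ _).2 fun x => congrFun hm.2 x

theorem finite_of_le_radical_annihilator (h : (Submodule.torsionBySet R M 𝔞).FG)
    (h𝔞 : 𝔞 ≤ (Module.annihilator R M).radical) : Module.Finite R M := by
  obtain ⟨k, hk⟩ := Ideal.exists_pow_le_of_le_radical_of_fg h𝔞 (IsNoetherian.noetherian 𝔞)
  have htop : Submodule.torsionBySet R M (𝔞 ^ k : Ideal R) = ⊤ :=
    (Module.isTorsionBySet_iff_torsionBySet_eq_top _).1 fun m r =>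
      Module.mem_annihilator.1 (hk r.2) m
  exact ⟨htop ▸ torsionBySet_pow_fg h k⟩

end Torsion

section Artinian

/- A chain `f` in `ℕ →o α` is a two-dimensional array: its diagonal stabilises, at index `d` say,
which takes care of all columns `k ≥ d` at once, and finitely many columns remain. -/
theorem wellFoundedGT_orderHom_nat {α : Type*} [PartialOrder α] [WellFoundedGT α] :
    WellFoundedGT (ℕ →o α) := by
  refine wellFoundedGT_iff_monotone_chain_condition.2 fun f => ?_
  have f_mono {m m' k k' : ℕ} (hm : m ≤ m') (hk : k ≤ k') : f m k ≤ f m' k' :=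
    (f.monotone hm k).trans ((f m').monotone hk)
  obtain ⟨d, hd⟩ := WellFoundedGT.monotone_chain_condition
    (⟨fun n => f n n, fun _ _ h => f_mono h h⟩ : ℕ →o α)
  have columns (k : ℕ) : ∃ n, ∀ m, n ≤ m → f n k = f m k :=
    WellFoundedGT.monotone_chain_condition
      (⟨fun n => f n k, fun _ _ h => f_mono h le_rfl⟩ : ℕ →o α)
  choose c hc using columns
  have f_eq {m k : ℕ} (hm : d ≤ m) (hk : d ≤ k) : f m k = f d d :=
    le_antisymm ((f_mono (le_max_left m k) (le_max_right m k)).trans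
      (hd _ (hm.trans (le_max_left m k))).ge) (f_mono hm hk)
  refine ⟨d ⊔ (Finset.range d).sup c, fun m hm => OrderHom.ext _ _ (funext fun k => ?_)⟩
  obtain hk | hk := lt_or_ge k d
  · have hck : c k ≤ d ⊔ (Finset.range d).sup c :=
      (Finset.le_sup (Finset.mem_range.2 hk)).trans le_sup_right
    rw [← hc k _ hck, ← hc k _ (hck.trans hm)]
  · rw [f_eq le_sup_left hk, f_eq (le_sup_left.trans hm) hk]

variable {A M : Type*} [CommRing A] [AddCommGroup M] [Module A M]

open scoped Pointwise in
/-- The socle-type filtration `k ↦ xᵏN ∩ ker x` attached to a submodule `N` of `M`, ordered by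
reverse inclusion. When every element is killed by a power of `x`, it detects strict inclusions of
submodules, so it transfers the descending chain condition from `ker x` to `M`. -/
def powSmulInfKer (x : A) (N : Submodule A M) :
    ℕ →o (Submodule A (LinearMap.ker (LinearMap.lsmul A M x)))ᵒᵈ where
  toFun k := OrderDual.toDual ((x ^ k • N).submoduleOf _)
  monotone' k k' hk := by
    refine Submodule.comap_mono (f := Submodule.subtype _) ?_
    rw [← Nat.add_sub_of_le hk, pow_add, mul_smul]
    exact smul_le_smul_left _ (Submodule.smul_le_self_of_tower _ N)

open scoped Pointwise in
theorem mem_powSmulInfKer {x : A} {N : Submodule A M} {k : ℕ}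
    {m : LinearMap.ker (LinearMap.lsmul A M x)} :
    m ∈ OrderDual.ofDual (powSmulInfKer x N k) ↔ ∃ z ∈ N, x ^ k • z = m.1 :=
  Submodule.mem_comap.trans (Submodule.mem_smul_pointwise_iff_exists _ _ _)

theorem powSmulInfKer_antitone (x : A) :
    Antitone (powSmulInfKer x : Submodule A M → ℕ →o _) := fun N N' h k m hm => by
  obtain ⟨z, hz, hzm⟩ := mem_powSmulInfKer.1 hm
  exact mem_powSmulInfKer.2 ⟨z, h hz, hzm⟩

/- If `xⁿ⁺¹z = 0` then `xⁿz` lies in `xⁿN' ∩ ker x = xⁿN ∩ ker x`, so `z` differs from an element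
of `N` by one killed by `xⁿ`. -/
theorem le_of_powSmulInfKer_le {x : A} (hx : ∀ m : M, ∃ n, x ^ n • m = 0) {N N' : Submodule A M}
    (hN : N ≤ N') (h : powSmulInfKer x N ≤ powSmulInfKer x N') : N' ≤ N := by
  have mem_of_pow_smul (n : ℕ) : ∀ z ∈ N', x ^ n • z = 0 → z ∈ N := by
    induction n with
    | zero =>
      intro z _ hz
      rw [pow_zero, one_smul] at hz
      exact hz ▸ N.zero_mem
    | succ n ih =>
      intro z hz hzn
      have hker : x ^ n • z ∈ LinearMap.ker (LinearMap.lsmul A M x) := by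
        rwa [LinearMap.mem_ker, LinearMap.lsmul_apply, smul_smul, ← pow_succ']
      obtain ⟨w, hw, hwz⟩ := mem_powSmulInfKer.1
        (h n (mem_powSmulInfKer.2 ⟨z, hz, rfl⟩ : (⟨_, hker⟩ : LinearMap.ker _) ∈ _))
      have hsub : z - w ∈ N :=
        ih _ (N'.sub_mem hz (hN hw)) (by rw [smul_sub, hwz, sub_self])
      simpa using N.add_mem hsub hw
  exact fun z hz => (hx z).elim fun n hn => mem_of_pow_smul n z hz hn

theorem isArtinian_of_isArtinian_ker_lsmul {x : A} (hx : ∀ m : M, ∃ n, x ^ n • m = 0)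
    [IsArtinian A (LinearMap.ker (LinearMap.lsmul A M x))] : IsArtinian A M := by
  have : WellFoundedGT (ℕ →o (Submodule A (LinearMap.ker (LinearMap.lsmul A M x)))ᵒᵈ) :=
    wellFoundedGT_orderHom_nat
  have h_strict : StrictAnti (powSmulInfKer x : Submodule A M → ℕ →o _) := fun N N' h =>
    (powSmulInfKer_antitone x h.le).lt_of_not_ge fun hle =>
      h.not_ge (le_of_powSmulInfKer_le hx h.le hle)
  exact h_strict.wellFoundedLT

theorem isArtinian_of_isArtinian_torsionBySet (s : Finset A)
    (hs : ∀ x ∈ s, ∀ m : M, ∃ n, x ^ n • m = 0)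
    (h : IsArtinian A (Submodule.torsionBySet A M s)) : IsArtinian A M := by
  classical
  induction s using Finset.induction_on generalizing M with
  | empty =>
    have htop : Submodule.torsionBySet A M ((∅ : Finset A) : Set A) = ⊤ := by
      ext
      simp
    rw [htop] at h
    exact Submodule.topEquiv.isArtinian_iff.1 h
  | insert x s _ ih =>
    let K := LinearMap.ker (LinearMap.lsmul A M x)
    have torsion_le : (Submodule.torsionBySet A K s).map K.subtype ≤
        Submodule.torsionBySet A M ((insert x s : Finset A) : Set A) := by
      rintro _ ⟨m, hm, rfl⟩
      refine (Submodule.mem_torsionBySet_iff _ _).2 fun ⟨y, hy⟩ => ?_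
      obtain rfl | hy := Finset.mem_insert.1 hy
      · exact m.2
      · exact congrArg Subtype.val ((Submodule.mem_torsionBySet_iff _ _).1 hm ⟨y, hy⟩)
    have h_torsion : IsArtinian A (Submodule.torsionBySet A K s) :=
      (Submodule.equivMapOfInjective K.subtype K.subtype_injective _).symm.isArtinian_iff.1
        (isArtinian_of_le torsion_le)
    have : IsArtinian A K := ih (fun y hy m =>
      (hs y (Finset.mem_insert_of_mem hy) m.1).imp fun _ hn => Subtype.ext hn) h_torsion
    exact isArtinian_of_isArtinian_ker_lsmul (hs x (Finset.mem_insert_self x s))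

theorem isArtinian_of_support_isMaximal [IsNoetherianRing A] [Module.Finite A M]
    (hM : ∀ p ∈ Module.support A M, p.asIdeal.IsMaximal) : IsArtinian A M := by
  induction ‹Module.Finite A M› using
    IsNoetherianRing.induction_on_isQuotientEquivQuotientPrime A with
  | subsingleton N => infer_instance
  | quotient N p e =>
    have hp : p.asIdeal.IsMaximal := hM p <| by
      rw [e.support_eq, Module.mem_support_iff_of_finite, Ideal.annihilator_quotient]
    have : IsSimpleModule A (A ⧸ p.asIdeal) := isSimpleModule_iff_isCoatom.2 hp.1
    exact e.symm.isArtinian_iff.1 inferInstance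
  | exact N₁ N₂ N₃ f g hf hg hfg h₁ h₃ =>
    have := h₁ fun p hp => hM p (Module.support_subset_of_injective f hf hp)
    have := h₃ fun p hp => hM p (Module.support_subset_of_surjective g hg hp)
    exact isArtinian_of_range_eq_ker f g (LinearMap.exact_iff.1 hfg).symm

end Artinian

section Localization

variable {R} {M : Type*} [AddCommGroup M] [Module R M]

theorem torsionBySet_eq_finset_inf (s : Finset R) :
    Submodule.torsionBySet R M s = s.inf (Submodule.torsionBy R M) := by
  rw [Submodule.torsionBySet, Finset.inf_eq_iInf, sInf_image]
  rfl

theorem exists_pow_smul_eq_zero_of_isLocalizedModule (A : Type*) [CommRing A] [Algebra R A]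
    (S : Submonoid R) {M' : Type*} [AddCommGroup M'] [Module R M'] [Module A M']
    [IsScalarTower R A M'] (f : M →ₗ[R] M') [IsLocalizedModule S f] {x : R}
    (hx : ∀ m : M, ∃ n, x ^ n • m = 0) (z : M') : ∃ n, algebraMap R A x ^ n • z = 0 := by
  obtain ⟨⟨m, s⟩, rfl⟩ := IsLocalizedModule.mk'_surjective S f z
  obtain ⟨n, hn⟩ := hx m
  refine ⟨n, ?_⟩
  rw [Function.uncurry_apply_pair, ← map_pow, algebraMap_smul, ← IsLocalizedModule.mk'_smul, hn,
    IsLocalizedModule.mk'_zero]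

section

variable (A : Type*) [CommRing A] [Algebra R A] (S : Submonoid R) [IsLocalization S A]
  {M' : Type*} [AddCommGroup M'] [Module R M'] [Module A M'] [IsScalarTower R A M']
  (f : M →ₗ[R] M') [IsLocalizedModule S f]

theorem localized'_torsionBy (x : R) :
    (Submodule.torsionBy R M x).localized' A S f = Submodule.torsionBy A M' (algebraMap R A x) := by
  refine le_antisymm ?_ fun z hz => ?_
  · rintro _ ⟨m, hm, s, rfl⟩
    rw [Submodule.mem_torsionBy_iff, algebraMap_smul, ← IsLocalizedModule.mk'_smul,
      (Submodule.mem_torsionBy_iff x m).1 hm, IsLocalizedModule.mk'_zero]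
  · obtain ⟨⟨m, s⟩, rfl⟩ := IsLocalizedModule.mk'_surjective S f z
    rw [Function.uncurry_apply_pair, Submodule.mem_torsionBy_iff, algebraMap_smul,
      ← IsLocalizedModule.mk'_smul, IsLocalizedModule.mk'_eq_zero'] at hz
    obtain ⟨t, ht⟩ := hz
    refine ⟨t • m, ?_, t * s, IsLocalizedModule.mk'_cancel_left (f := f) m t s⟩
    rwa [Submodule.mem_torsionBy_iff, smul_comm]

theorem localized'_torsionBySet [DecidableEq A] (s : Finset R) :
    (Submodule.torsionBySet R M s).localized' A S f =
      Submodule.torsionBySet A M' (s.image (algebraMap R A)) := by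
  calc (Submodule.torsionBySet R M s).localized' A S f
      = Submodule.localized'FrameHom A S f (s.inf (Submodule.torsionBy R M)) := by
        rw [torsionBySet_eq_finset_inf]; rfl
    _ = s.inf fun x => (Submodule.torsionBy R M x).localized' A S f := map_finset_inf _ _ _
    _ = s.inf fun x => Submodule.torsionBy A M' (algebraMap R A x) := by
        simp only [localized'_torsionBy]
    _ = Submodule.torsionBySet A M' (s.image (algebraMap R A)) := by
        rw [torsionBySet_eq_finset_inf, Finset.inf_image]; rfl

theorem map_annihilator_le_annihilator_localized' (L : Submodule R M) :
    (Module.annihilator R L).map (algebraMap R A) ≤ Module.annihilator A (L.localized' A S f) := by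
  refine Ideal.map_le_iff_le_comap.2 fun r hr => Module.mem_annihilator.2 ?_
  rintro ⟨_, m, hm, s, rfl⟩
  have hrm : r • m = 0 := congrArg Subtype.val (Module.mem_annihilator.1 hr ⟨m, hm⟩)
  refine Subtype.ext ?_
  rw [Submodule.coe_smul, algebraMap_smul, ← IsLocalizedModule.mk'_smul, hrm,
    IsLocalizedModule.mk'_zero, Submodule.coe_zero]

end

variable [IsNoetherianRing R] {p : Ideal R} [p.IsPrime]

theorem isArtinian_localized_of_mem_minimalPrimes {L : Submodule R M} (hL : L.FG)
    (hp : p ∈ (Module.annihilator R L).minimalPrimes) :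
    IsArtinian (Localization.AtPrime p) (L.localized p.primeCompl) := by
  have : IsNoetherianRing (Localization.AtPrime p) :=
    IsLocalization.isNoetherianRing p.primeCompl _ inferInstance
  have : Module.Finite (Localization.AtPrime p) (L.localized p.primeCompl) :=
    Module.Finite.iff_fg.2 (L.localized_fg p.primeCompl hL)
  have h_min : IsLocalRing.maximalIdeal (Localization.AtPrime p) ∈
      ((Module.annihilator R L).map (algebraMap R _)).minimalPrimes := by
    rw [IsLocalization.minimalPrimes_map p.primeCompl]
    rwa [Set.mem_preimage, Localization.AtPrime.under_maximalIdeal]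
  refine isArtinian_of_support_isMaximal fun q hq => ?_
  have h_le : (Module.annihilator R L).map (algebraMap R _) ≤ q.asIdeal :=
    (map_annihilator_le_annihilator_localized' _ _ _ L).trans
      (Module.annihilator_le_of_mem_support hq)
  have hq_eq : q.asIdeal = IsLocalRing.maximalIdeal (Localization.AtPrime p) :=
    (IsLocalRing.le_maximalIdeal_of_isPrime q.asIdeal).antisymm
      (h_min.2 ⟨q.isPrime, h_le⟩ (IsLocalRing.le_maximalIdeal_of_isPrime q.asIdeal))
  rw [hq_eq]
  infer_instance

theorem isArtinian_localizedModule_of_mem_minimalPrimes {s : Finset R}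
    (hs : ∀ x ∈ s, ∀ m : M, ∃ n, x ^ n • m = 0)
    (h : (Submodule.torsionBySet R M s).FG)
    (hp : p ∈ (Module.annihilator R (Submodule.torsionBySet R M s)).minimalPrimes) :
    IsArtinian (Localization.AtPrime p) (LocalizedModule p.primeCompl M) := by
  classical
  refine isArtinian_of_isArtinian_torsionBySet (s.image (algebraMap R _)) ?_ ?_
  · rintro _ hx z
    obtain ⟨x, hxs, rfl⟩ := Finset.mem_image.1 hx
    exact exists_pow_smul_eq_zero_of_isLocalizedModule _ p.primeCompl
      (LocalizedModule.mkLinearMap _ M) (hs x hxs) z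
  · rw [← localized'_torsionBySet _ p.primeCompl (LocalizedModule.mkLinearMap _ M)]
    exact isArtinian_localized_of_mem_minimalPrimes h hp

end Localization

section Support

variable {R} {M : Type*} [AddCommGroup M] [Module R M] {𝔞 : Ideal R}

theorem exists_pow_smul_eq_zero_of_support_subset
    (hM : Module.support R M ⊆ PrimeSpectrum.zeroLocus (𝔞 : Set R)) {x : R} (hx : x ∈ 𝔞) (m : M) :
    ∃ n, x ^ n • m = 0 := by
  have hx_mem : x ∈ (Submodule.span R {m}).annihilator.radical := by
    rw [Ideal.radical_eq_sInf, Submodule.mem_sInf]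
    rintro p ⟨hmp, hp⟩
    exact hM (Module.mem_support_iff_exists_annihilator.2 ⟨m, hmp⟩ :
      (⟨p, hp⟩ : PrimeSpectrum R) ∈ _) hx
  exact hx_mem.imp fun n hn => (Submodule.mem_annihilator_span_singleton _ _).1 hn

section

variable [IsNoetherianRing R]

theorem exists_mem_associatedPrimes_le_of_mem_support {q : PrimeSpectrum R}
    (hq : q ∈ Module.support R M) : ∃ p ∈ associatedPrimes R M, p ≤ q.asIdeal := by
  obtain ⟨m, hm⟩ := Module.mem_support_iff_exists_annihilator.1 hq
  obtain ⟨p, hp, hpq⟩ := Ideal.exists_minimalPrimes_le hm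
  have hp_ass : p ∈ associatedPrimes R (Submodule.span R {m}) :=
    Module.associatedPrimes.minimalPrimes_annihilator_subset_associatedPrimes R _ hp
  exact ⟨p, hp_ass.map_of_injective (Submodule.span R {m}).subtype
    (Submodule.subtype_injective _), hpq⟩

theorem support_torsionBySet_eq
    (hM : Module.support R M ⊆ PrimeSpectrum.zeroLocus (𝔞 : Set R)) :
    Module.support R (Submodule.torsionBySet R M 𝔞) = Module.support R M := by
  refine (Module.support_subset_of_injective _ (Submodule.subtype_injective _)).antisymm
    fun q hq => ?_
  obtain ⟨p, hp, hpq⟩ := exists_mem_associatedPrimes_le_of_mem_support hq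
  obtain ⟨hp_prime, m, rfl⟩ := isAssociatedPrime_iff.1 hp
  have mem_iff (r : R) : r ∈ (⊥ : Submodule R M).colon {m} ↔ r • m = 0 := by
    rw [Submodule.mem_colon_singleton, Submodule.mem_bot]
  have hp_supp : (⟨_, hp_prime⟩ : PrimeSpectrum R) ∈ Module.support R M :=
    Module.mem_support_iff_exists_annihilator.2 ⟨m, Submodule.bot_colon'.ge⟩
  have hm : m ∈ Submodule.torsionBySet R M 𝔞 :=
    (Submodule.mem_torsionBySet_iff _ _).2 fun r => (mem_iff r).1 (hM hp_supp r.2)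
  refine Module.mem_support_iff_exists_annihilator.2 ⟨⟨m, hm⟩, fun r hr => hpq ((mem_iff r).2 ?_)⟩
  exact congrArg Subtype.val ((Submodule.mem_annihilator_span_singleton _ _).1 hr)

end

/-- The subquotient `xⁿM ⧸ xⁿ⁺¹M` of `M`, with `xⁿ⁺¹M` encoded as the range of `x` on the module
`xⁿM`. -/
abbrev PowQuotient (M : Type*) [AddCommGroup M] [Module R M] (x : R) (n : ℕ) : Type _ :=
  LinearMap.range (LinearMap.lsmul R M (x ^ n)) ⧸
    LinearMap.range (LinearMap.lsmul R (LinearMap.range (LinearMap.lsmul R M (x ^ n))) x)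

theorem support_powQuotient_subset (x : R) (n : ℕ) :
    Module.support R (PowQuotient M x n) ⊆ Module.support R M :=
  (Module.support_subset_of_surjective _ (Submodule.mkQ_surjective _)).trans
    (Module.support_subset_of_injective _ (Submodule.subtype_injective _))

theorem eventually_forall_exists_pow_smul_eq_pow_succ_smul (M : Type*) [AddCommGroup M]
    [Module R M] [IsArtinian R M] (x : R) :
    ∀ᶠ n in Filter.atTop, ∀ m : M, ∃ z : M, x ^ n • m = x ^ (n + 1) • z := by
  obtain ⟨k, hk⟩ := IsArtinian.range_smul_pow_stabilizes M x
  refine Filter.eventually_atTop.2 ⟨k, fun n hn m => ?_⟩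
  have h_range := (hk n hn).symm.trans (hk (n + 1) (hn.trans n.le_succ))
  obtain ⟨z, hz⟩ := h_range.le (LinearMap.mem_range_self _ m)
  exact ⟨z, hz.symm⟩

theorem eventually_notMem_support_powQuotient (p : PrimeSpectrum R)
    [IsArtinian (Localization.AtPrime p.asIdeal) (LocalizedModule p.asIdeal.primeCompl M)] (x : R) :
    ∀ᶠ n in Filter.atTop, p ∉ Module.support R (PowQuotient M x n) := by
  let f := LocalizedModule.mkLinearMap p.asIdeal.primeCompl M
  filter_upwards [eventually_forall_exists_pow_smul_eq_pow_succ_smul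
    (LocalizedModule p.asIdeal.primeCompl M) (algebraMap R (Localization.AtPrime p.asIdeal) x)]
    with n hn
  refine Module.notMem_support_iff'.2 fun y => ?_
  obtain ⟨⟨_, m, rfl⟩, rfl⟩ := Submodule.mkQ_surjective _ y
  obtain ⟨z, hz⟩ := hn (f m)
  obtain ⟨⟨m', s⟩, rfl⟩ := IsLocalizedModule.mk'_surjective p.asIdeal.primeCompl f z
  have h_eq : f (s • x ^ n • m) = f (x ^ (n + 1) • m') := by
    rw [← map_pow, ← map_pow, algebraMap_smul, algebraMap_smul, Function.uncurry_apply_pair] at hz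
    rw [Submonoid.smul_def, map_smul, map_smul, hz, smul_comm, ← Submonoid.smul_def,
      IsLocalizedModule.mk'_cancel', map_smul]
  obtain ⟨c, hc⟩ := IsLocalizedModule.exists_of_eq (S := p.asIdeal.primeCompl) h_eq
  refine ⟨(c * s : p.asIdeal.primeCompl), (c * s).2, (Submodule.Quotient.mk_eq_zero _).2
    ⟨⟨x ^ n • (c : R) • m', ⟨_, rfl⟩⟩, Subtype.ext ?_⟩⟩
  simp only [LinearMap.lsmul_apply, Submodule.coe_smul, Submonoid.coe_mul]
  calc x • x ^ n • (c : R) • m' = c • x ^ (n + 1) • m' := by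
        rw [Submonoid.smul_def, smul_smul, ← pow_succ', smul_comm]
    _ = ((c : R) * s) • x ^ n • m := by rw [← hc, mul_smul]; rfl

theorem exists_lt_of_mem_support_powQuotient [IsNoetherianRing R]
    (hM : Module.support R M ⊆ PrimeSpectrum.zeroLocus (𝔞 : Set R))
    (h : (Submodule.torsionBySet R M 𝔞).FG) (x : R) :
    ∃ n, ∀ q ∈ Module.support R (PowQuotient M x n), ∃ p ∈ Module.support R M, p < q := by
  obtain ⟨s, rfl⟩ := IsNoetherian.noetherian 𝔞
  let T := Submodule.torsionBySet R M (Ideal.span (s : Set R))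
  have eventually_notMem : ∀ᶠ n in Filter.atTop,
      ∀ p : PrimeSpectrum R, p.asIdeal ∈ (Module.annihilator R T).minimalPrimes →
        p ∉ Module.support R (PowQuotient M x n) := by
    have h_finite : (PrimeSpectrum.asIdeal ⁻¹' (Module.annihilator R T).minimalPrimes).Finite :=
      (Ideal.finite_minimalPrimes_of_isNoetherianRing R _).preimage
        fun _ _ _ _ => PrimeSpectrum.ext
    refine h_finite.eventually_all.2 fun p hp => ?_
    have hs : ∀ y ∈ s, ∀ m : M, ∃ n, y ^ n • m = 0 := fun y hy =>
      exists_pow_smul_eq_zero_of_support_subset hM (Ideal.subset_span hy)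
    rw [← Submodule.torsionBySet_eq_torsionBySet_span] at h
    have := isArtinian_localizedModule_of_mem_minimalPrimes (p := p.asIdeal) hs h
      (by rwa [Submodule.torsionBySet_eq_torsionBySet_span])
    exact eventually_notMem_support_powQuotient p x
  obtain ⟨n, hn⟩ := eventually_notMem.exists
  refine ⟨n, fun q hq => ?_⟩
  have : Module.Finite R T := Module.Finite.iff_fg.2 h
  have support_T : Module.support R T = Module.support R M := support_torsionBySet_eq hM
  obtain ⟨p, hp, hpq⟩ := Ideal.exists_minimalPrimes_le (Module.annihilator_le_of_mem_support
    (support_T.symm ▸ support_powQuotient_subset x n hq))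
  let p' : PrimeSpectrum R := ⟨p, hp.1.1⟩
  have hp_mem : p' ∈ Module.support R M := support_T ▸ Module.mem_support_iff_of_finite.2 hp.1.2
  exact ⟨p', hp_mem, lt_of_le_of_ne hpq fun h_eq => hn p' hp (h_eq ▸ hq)⟩

end Support

theorem krullDim_lt_of_forall_exists_lt {α : Type*} [Preorder α] {s t : Set α} (hst : s ⊆ t)
    (h : ∀ b ∈ s, ∃ a ∈ t, a < b) {d : ℕ} (ht : Order.krullDim t < (d + 1 : ℕ)) :
    Order.krullDim s < d := by
  rw [Order.krullDim_lt_coe_iff] at ht ⊢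
  intro l
  obtain ⟨a, ha, hal⟩ := h l.head l.head.2
  let l' : LTSeries t := l.map (Set.inclusion hst) fun _ _ hlt => hlt
  exact Nat.succ_lt_succ_iff.1 ((RelSeries.cons_length l' ⟨a, ha⟩ hal).symm.trans_lt (ht _))

section Cofinite

variable {R} {M : Type u} [AddCommGroup M] [Module R M]

theorem suppDim_mono {L : Type u} [AddCommGroup L] [Module R L]
    (h : Module.support R L ⊆ Module.support R M) : suppDim R L ≤ suppDim R M :=
  Order.krullDim_le_of_strictMono (Set.inclusion h) fun _ _ hlt => hlt

theorem annihilator_lt_of_injective {L : Type u} [AddCommGroup L] [Module R L] {f : L →ₗ[R] M}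
    (hf : Function.Injective f) {x : R} (hx : x ∉ (Module.annihilator R M).radical) {n : ℕ}
    (hxL : x ^ n ∈ Module.annihilator R L) : Module.annihilator R M < Module.annihilator R L :=
  SetLike.lt_iff_le_and_exists.2
    ⟨f.annihilator_le_of_injective hf, x ^ n, hxL, fun hxM => hx ⟨n, hxM⟩⟩

theorem mem_annihilator_ker_lsmul {M : Type*} [AddCommGroup M] [Module R M] (x : R) :
    x ∈ Module.annihilator R (LinearMap.ker (LinearMap.lsmul R M x)) :=
  Module.mem_annihilator.2 fun m => Subtype.ext m.2

variable [IsNoetherianRing R]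

namespace HasFiniteExt

variable {N : ModuleCat.{u} R} {d : ℕ}

theorem ker_of_le_one {f : M →ₗ[R] M} (hd : d ≤ 1) (h : ∀ i ≤ d, HasFiniteExt N M i) :
    ∀ i ≤ d, HasFiniteExt N (LinearMap.ker f) i := by
  rintro (_ | i) hi
  · exact submodule_zero _ (h 0 hi)
  · obtain rfl : i = 0 := by omega
    exact ker_succ (h 1 hi) (submodule_zero _ (h 0 (Nat.zero_le d)))

theorem range_of_le_one {f : M →ₗ[R] M} (hd : d ≤ 1) (h : ∀ i ≤ d, HasFiniteExt N M i)
    (hker : (∀ i ≤ d, HasFiniteExt N (LinearMap.ker f) i) →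
      ∀ i, HasFiniteExt N (LinearMap.ker f) i) :
    ∀ i ≤ d, HasFiniteExt N (LinearMap.range f) i :=
  fun i hi => range (h i hi) (hker (ker_of_le_one hd h) (i + 1))

theorem of_powQuotient {x : R} (hx : x ∈ Module.annihilator R N) {n : ℕ} (hd : d ≤ 1)
    (h : ∀ i ≤ d, HasFiniteExt N M i)
    (hker_pow : (∀ i ≤ d, HasFiniteExt N (LinearMap.ker (LinearMap.lsmul R M (x ^ n))) i) →
      ∀ i, HasFiniteExt N (LinearMap.ker (LinearMap.lsmul R M (x ^ n))) i)
    (hker : (∀ i ≤ d, HasFiniteExt N (LinearMap.ker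
        (LinearMap.lsmul R (LinearMap.range (LinearMap.lsmul R M (x ^ n))) x)) i) →
      ∀ i, HasFiniteExt N (LinearMap.ker
        (LinearMap.lsmul R (LinearMap.range (LinearMap.lsmul R M (x ^ n))) x)) i)
    (hquot : (∀ i < d, HasFiniteExt N (PowQuotient M x n) i) →
      ∀ i, HasFiniteExt N (PowQuotient M x n) i) (i : ℕ) :
    HasFiniteExt N M i := by
  have h_range := range_of_le_one hd h hker_pow
  have h_quot : ∀ i, HasFiniteExt N (PowQuotient M x n) i := hquot fun i hi =>
    quotient (h_range i hi.le) (range_of_le_one hd h_range hker (i + 1) hi)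
  exact of_ker_of_range (hker_pow (ker_of_le_one hd h) i)
    (of_ker_lsmul_of_quotient hx (hker (ker_of_le_one hd h_range) i) fun j _ => h_quot j)

end HasFiniteExt

theorem hasFiniteExt_of_suppDim_lt {𝔞 : Ideal R} {d : ℕ} (hd : d ≤ 2)
    (hM : Module.support R M ⊆ PrimeSpectrum.zeroLocus (𝔞 : Set R)) (hdim : suppDim R M < d)
    (h : ∀ i < d, HasFiniteExt (ModuleCat.of R (R ⧸ 𝔞)) M i) (i : ℕ) :
    HasFiniteExt (ModuleCat.of R (R ⧸ 𝔞)) M i := by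
  induction d generalizing M i with
  | zero =>
    have : Subsingleton M := Module.support_eq_empty_iff.1 <| Set.not_nonempty_iff_eq_empty.1
      fun h_ne => hdim.not_ge (Order.krullDim_nonneg_iff.2 h_ne.to_subtype)
    exact HasFiniteExt.of_finite M i
  | succ d ih =>
    generalize hI : Module.annihilator R M = I
    induction I using WellFoundedGT.induction generalizing M i with
    | ind I ih_ann =>
    subst hI
    have h_fg := (hasFiniteExt_zero_iff_torsionBySet_fg 𝔞).1 (h 0 d.succ_pos)
    by_cases h_le : 𝔞 ≤ (Module.annihilator R M).radical
    · have := finite_of_le_radical_annihilator h_fg h_le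
      exact HasFiniteExt.of_finite M i
    obtain ⟨x, hx𝔞, hx⟩ := SetLike.not_le_iff_exists.1 h_le
    obtain ⟨n, hn⟩ := exists_lt_of_mem_support_powQuotient hM h_fg x
    have of_injective {L : Type u} [AddCommGroup L] [Module R L] (f : L →ₗ[R] M)
        (hf : Function.Injective f) {k : ℕ} (hk : x ^ k ∈ Module.annihilator R L)
        (hL : ∀ i ≤ d, HasFiniteExt (ModuleCat.of R (R ⧸ 𝔞)) L i) (i : ℕ) :
        HasFiniteExt (ModuleCat.of R (R ⧸ 𝔞)) L i :=
      have h_supp := Module.support_subset_of_injective f hf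
      ih_ann _ (annihilator_lt_of_injective hf hx hk) (h_supp.trans hM)
        ((suppDim_mono h_supp).trans_lt hdim) (fun i hi => hL i (Nat.lt_succ_iff.1 hi)) i rfl
    have h_supp := support_powQuotient_subset (M := M) x n
    refine HasFiniteExt.of_powQuotient (x := x) (n := n) (d := d) ?_ (Nat.succ_le_succ_iff.1 hd)
      (fun i hi => h i (Nat.lt_succ_iff.2 hi)) ?_ ?_ ?_ i
    · rwa [Ideal.annihilator_quotient]
    · exact of_injective _ (Submodule.subtype_injective _) (mem_annihilator_ker_lsmul _)
    · exact of_injective (k := 1) (Submodule.subtype _ ∘ₗ Submodule.subtype _)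
        ((Submodule.subtype_injective _).comp (Submodule.subtype_injective _))
        ((pow_one x).symm ▸ mem_annihilator_ker_lsmul x)
    · exact fun hQ => ih (by omega) (h_supp.trans hM)
        (krullDim_lt_of_forall_exists_lt h_supp hn hdim) hQ

end Cofinite

theorem stmt5 [IsNoetherianRing R] (𝔞 : Ideal R) (M : ModuleCat.{u} R) [Nontrivial M]
    (h1 : suppDim R M ≤ 1)
    (h2 : Module.support R M ⊆ PrimeSpectrum.zeroLocus (𝔞 : Set R)) :
    IsCofinite R 𝔞 M ↔
      Module.Finite R ((R ⧸ 𝔞) →ₗ[R] M) ∧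
        Module.Finite R (extModule R 1 (ModuleCat.of R (R ⧸ 𝔞)) M) := by
  constructor
  · rintro ⟨-, h⟩
    exact ⟨HasFiniteExt.zero_iff_finite_hom.1
      ((Module.Finite.equiv_iff (extModuleEquiv 0 _ M)).1 (h 0)), h 1⟩
  · rintro ⟨h_hom, h_ext⟩
    refine ⟨h2, fun i => (Module.Finite.equiv_iff (extModuleEquiv i _ M)).2 <|
      hasFiniteExt_of_suppDim_lt le_rfl h2 (h1.trans_lt (by norm_num)) ?_ i⟩
    intro i hi
    interval_cases i
    · exact HasFiniteExt.zero_iff_finite_hom.2 h_hom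
    · exact (Module.Finite.equiv_iff (extModuleEquiv 1 _ M)).1 h_ext
end
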